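/- arXiv:2412.02526 — 17 statements merged into one kernel-verified Lean document; each statement's English description precedes it below -/
import Mathlib

section
/- Suppose the girth-8 matrix M₈ is valid, and suppose there exist an integer m with 2 ≤ m ≤ L, pairwise distinct indices i₁,…,i_m ∈ {0,…,L−1}, and an element d ∈ ℤ/pℤ such that a_{i_{j+1}} − a_{i_j} = d for all 1 ≤ j ≤ m−1 (i.e., a_{i₁},…,a_{i_m} is an arithmetic progression in ℤ/pℤ). Then 2p ≥ m² − 3m + 4L, i.e., p ≥ (1/2)m² − (3/2)m + 2L. -/
/-!
Every diagonal entry `a i - b i` is attained only once in the matrix, so the `L` diagonal values are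
distinct from each other and from every off-diagonal value. It remains to exhibit
`L - 1 + (m - 1)(m - 2) / 2` distinct off-diagonal values in the rows of the progression.
Write `f 0, …, f (m - 1)` for the indices of these rows. The off-diagonal part of row `f 0` supplies
`L - 1` values, and the entries `(f t, f s)` with `0 < t < s < m` supply the others.
They are all different: if the entry `(f t, f s)` with `t ≤ s` equals an entry in column `k` of an
earlier row `f u`, `u < t`, then adding `(s - t) d` to both shows that the diagonal entry at `f s`
is repeated in row `f (s - t + u)` (`entry_ne_of_lt`).
-/

/-- An entry on or before the diagonal of column `f s`, in a row of the progression, never recurs in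
an earlier row of the progression. -/
lemma entry_ne_of_lt {L p m : ℕ} {a b : Fin L → ZMod p}
    (hv : ∀ i j k : Fin L, (j, k) ≠ (i, i) → a i - b i ≠ a j - b k)
    {f : ℕ → Fin L} (hf : ∀ s < m, ∀ t < m, f s = f t → s = t)
    {d : ZMod p} (hA : ∀ s < m, a (f s) = a (f 0) + s * d)
    {s t u : ℕ} (k : Fin L) (hs : s < m) (hts : t ≤ s) (hut : u < t) :
    a (f t) - b (f s) ≠ a (f u) - b k := by
  intro h
  refine hv (f s) (f (s - t + u)) k ?_ ?_
  · intro h1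
    have := hf _ (by omega) _ hs (Prod.ext_iff.1 h1).1
    omega
  · rw [hA t (by omega), hA u (by omega)] at h
    rw [hA s hs, hA (s - t + u) (by omega)]
    push_cast [Nat.cast_sub hts]
    linear_combination h

lemma two_mul_sum_pred_add (m : ℕ) (hm : 1 ≤ m) :
    2 * ∑ s ∈ Finset.range m, (s - 1) + 3 * m = m ^ 2 + 2 := by
  induction m, hm using Nat.le_induction with
  | base => simp
  | succ n hn ih =>
    rw [Finset.sum_range_succ]
    obtain ⟨r, rfl⟩ := Nat.exists_eq_add_of_le' hn
    simp only [Nat.add_sub_cancel] at *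
    nlinarith

/-- If the girth-8 matrix `M₈` (with entries `a i - b j` over `ZMod p`)
is valid and `a` contains an arithmetic progression of length `m` (indexed by pairwise
distinct indices `idx 0, …, idx (m-1)` with common difference `d`), then
`2*p ≥ m^2 - 3*m + 4*L`, i.e. `p ≥ (1/2)m² - (3/2)m + 2L`. -/
theorem stmt_0 (L p : ℕ) (hL : 2 ≤ L) (hp : 2 ≤ p)
    (a b : Fin L → ZMod p)
    (ha0 : a ⟨0, by omega⟩ = 0) (hb0 : b ⟨0, by omega⟩ = 0)
    (hvalid1 : ∀ i j k : Fin L, (j, k) ≠ (i, i) → a i - b i ≠ a j - b k)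
    (hvalid2 : Function.Injective a)
    (hvalid3 : Function.Injective b)
    (m : ℕ) (hm : 2 ≤ m) (hmL : m ≤ L)
    (idx : Fin m → Fin L) (hidx : Function.Injective idx)
    (d : ZMod p)
    (hAP : ∀ s : ℕ, (hs : s + 1 < m) →
      a (idx ⟨s + 1, hs⟩) - a (idx ⟨s, by omega⟩) = d) :
    m ^ 2 + 4 * L ≤ 2 * p + 3 * m := by
  obtain ⟨f, hfi⟩ : ∃ f : ℕ → Fin L, ∀ n (h : n < m), f n = idx ⟨n, h⟩ :=
    ⟨fun n => if h : n < m then idx ⟨n, h⟩ else idx ⟨0, by omega⟩, fun n h => by simp [h]⟩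
  have hf : ∀ s < m, ∀ t < m, f s = f t → s = t := by
    intro s hs t ht h
    rw [hfi s hs, hfi t ht] at h
    simpa using hidx h
  have hA : ∀ s < m, a (f s) = a (f 0) + s * d := by
    intro s
    induction s with
    | zero => simp
    | succ n ih =>
      intro hn
      have h1 := hAP n hn
      rw [← hfi, ← hfi] at h1
      have h2 := ih (by omega)
      push_cast
      linear_combination h1 + h2
  have key := fun {s t u : ℕ} => entry_ne_of_lt (s := s) (t := t) (u := u) hvalid1 hf hA
  haveI : NeZero p := ⟨by omega⟩
  let S₁ : Finset (ZMod p) := Finset.univ.image fun i => a i - b i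
  let S₂ : Finset (ZMod p) := (Finset.univ.erase (f 0)).image fun k => a (f 0) - b k
  -- The pair `⟨s, j⟩` stands for the entry in row `f (j + 1)` and column `f s`, with `0 < j + 1 < s`.
  let I : Finset (Σ _ : ℕ, ℕ) := (Finset.range m).sigma fun s => Finset.range (s - 1)
  let S₃ : Finset (ZMod p) := I.image fun x => a (f (x.2 + 1)) - b (f x.1)
  have hI : ∀ x ∈ I, x.1 < m ∧ x.2 + 1 < x.1 := by
    intro x hx
    simp only [I, Finset.mem_sigma, Finset.mem_range] at hx
    omega
  have c₁ : S₁.card = L := by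
    rw [Finset.card_image_of_injective, Finset.card_univ, Fintype.card_fin]
    intro i j h
    by_contra hij
    exact hvalid1 i j j (fun h' => hij (Prod.ext_iff.1 h').1.symm) h
  have c₂ : S₂.card = L - 1 := by
    rw [Finset.card_image_of_injective, Finset.card_erase_of_mem (Finset.mem_univ _),
      Finset.card_univ, Fintype.card_fin]
    intro i j h
    exact hvalid3 (sub_right_injective h)
  have c₃ : S₃.card = ∑ s ∈ Finset.range m, (s - 1) := by
    rw [Finset.card_image_of_injOn, Finset.card_sigma]
    · simp
    · rintro ⟨s, t⟩ hx ⟨s', t'⟩ hx' h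
      have h1 := hI _ hx
      have h2 := hI _ hx'
      dsimp only at h h1 h2
      rcases lt_trichotomy t t' with h3 | rfl | h3
      · exact absurd h.symm (key _ h2.1 h2.2.le (by omega))
      · obtain rfl := hf _ h1.1 _ h2.1 (hvalid3 (sub_right_injective h))
        rfl
      · exact absurd h (key _ h1.1 h1.2.le (by omega))
  have d₁₂ : Disjoint S₁ S₂ := by
    rw [Finset.disjoint_left]
    intro x h1 h2
    simp only [S₁, S₂, Finset.mem_image, Finset.mem_univ, true_and, Finset.mem_erase,
      and_true] at h1 h2
    obtain ⟨i, rfl⟩ := h1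
    obtain ⟨k, hk, h⟩ := h2
    refine hvalid1 i (f 0) k (fun h' => hk ?_) h.symm
    rw [Prod.mk.injEq] at h'
    rw [h'.1, h'.2]
  have d₃ : Disjoint (S₁ ∪ S₂) S₃ := by
    rw [Finset.disjoint_left]
    intro x h1 h2
    obtain ⟨⟨s, t⟩, hx, rfl⟩ := Finset.mem_image.1 h2
    have h3 := hI _ hx
    dsimp only at h1 h3
    rcases Finset.mem_union.1 h1 with h1 | h1
    · obtain ⟨i, -, h⟩ := Finset.mem_image.1 h1
      refine hvalid1 i _ _ (fun h' => ?_) h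
      rw [Prod.mk.injEq] at h'
      have := hf _ (by omega) _ h3.1 (h'.1.trans h'.2.symm)
      omega
    · obtain ⟨k, -, h⟩ := Finset.mem_image.1 h1
      exact key k h3.1 h3.2.le (Nat.succ_pos t) h.symm
  have hcard := Finset.card_le_univ ((S₁ ∪ S₂) ∪ S₃)
  rw [Finset.card_union_of_disjoint d₃, Finset.card_union_of_disjoint d₁₂, c₁, c₂, c₃,
    ZMod.card] at hcard
  have := two_mul_sum_pred_add m (by omega)
  omega
end

section
/- Suppose the girth-8 matrix M₈ is valid and the whole sequence a₀,…,a_{L−1} is an arithmetic progression in ℤ/pℤ, i.e., there exists d ∈ ℤ/pℤ with a_{i+1} − a_i = d for all 0 ≤ i ≤ L−2. Then 2p ≥ L² + L, i.e., p ≥ (1/2)L² + (1/2)L. -/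
/-!
The `L(L+1)/2` elements `b k - a t` with `t ≤ k` are pairwise distinct in `ZMod p`, which gives
the bound. Suppose `b k - a t = b i - a s` with `t ≤ s ≤ i`. As `a` is an arithmetic progression,
`a s - a t = a i - a (i - (s - t))`, so the equation becomes `a i - b i = a (i - (s - t)) - b k`.
Since the diagonal entry `a i - b i` occurs nowhere else, `k = i` and `s = t`.
-/

/-- If the girth-8 matrix `M₈` is valid and the whole sequence
`a 0, …, a (L-1)` is an arithmetic progression in `ZMod p` with common difference `d`,
then `2*p ≥ L² + L`, i.e. `p ≥ (1/2)L² + (1/2)L`. -/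
theorem stmt_1 (L p : ℕ) (hL : 2 ≤ L) (hp : 2 ≤ p)
    (a b : Fin L → ZMod p)
    (ha0 : a ⟨0, by omega⟩ = 0) (hb0 : b ⟨0, by omega⟩ = 0)
    (hvalid1 : ∀ i j k : Fin L, (j, k) ≠ (i, i) → a i - b i ≠ a j - b k)
    (hvalid2 : Function.Injective a)
    (hvalid3 : Function.Injective b)
    (d : ZMod p)
    (hAP : ∀ s : ℕ, (hs : s + 1 < L) →
      a ⟨s + 1, hs⟩ - a ⟨s, by omega⟩ = d) :
    L ^ 2 + L ≤ 2 * p := by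
  have ha : ∀ (n : ℕ) (hn : n < L), a ⟨n, hn⟩ = n * d := by
    intro n
    induction n with
    | zero => intro _; simpa using ha0
    | succ m ih =>
      intro hn
      have h := hAP m hn
      rw [ih (by omega)] at h
      push_cast
      linear_combination h
  have key : ∀ (i k : Fin L) (s t : ℕ), t ≤ s → s ≤ i →
      b k - (t : ZMod p) * d = b i - (s : ZMod p) * d → k = i ∧ t = s := by
    intro i k s t hts hsi h
    have hlt : (i : ℕ) - (s - t) < L := by omega
    by_contra hne
    refine hvalid1 i ⟨i - (s - t), hlt⟩ k ?_ ?_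
    · intro he
      rw [Prod.mk.injEq, Fin.ext_iff] at he
      obtain ⟨h1, h2⟩ := he
      simp only at h1
      exact hne ⟨h2, by omega⟩
    · have hi : a i = (i : ℕ) * d := ha i i.2
      rw [hi, ha, Nat.cast_sub (by omega), Nat.cast_sub hts]
      linear_combination h
  have : NeZero p := ⟨by omega⟩
  let f : (Σ k : Fin L, Fin ((k : ℕ) + 1)) → ZMod p :=
    fun x => b x.1 - ((x.2 : ℕ) : ZMod p) * d
  have hf : Function.Injective f := by
    rintro ⟨k, t⟩ ⟨i, s⟩ h
    have h' : b k - ((t : ℕ) : ZMod p) * d = b i - ((s : ℕ) : ZMod p) * d := h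
    have hki : k = i ∧ (t : ℕ) = s := by
      rcases le_total (t : ℕ) s with hts | hts
      · exact key i k s t hts (by omega) h'
      · obtain ⟨h1, h2⟩ := key k i t s hts (by omega) h'.symm
        exact ⟨h1.symm, h2.symm⟩
    obtain ⟨rfl, hts⟩ := hki
    rw [Fin.ext hts]
  have hcard := Fintype.card_le_of_injective f hf
  rw [Fintype.card_sigma, ZMod.card] at hcard
  simp only [Fintype.card_fin] at hcard
  rw [Fin.sum_univ_eq_sum_range (fun k => k + 1) L] at hcard
  have hsum : ∀ n : ℕ, 2 * ∑ k ∈ Finset.range n, (k + 1) = n ^ 2 + n := by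
    intro n
    induction n with
    | zero => simp
    | succ m ih => rw [Finset.sum_range_succ, mul_add, ih]; ring
  have := hsum L
  omega
end

section
/- Fix d ∈ ℤ/pℤ with d ≠ 0. Suppose the girth-8 matrix M₈ is valid and there exist m pairwise index-disjoint subsequences of (a₀,…,a_{L−1}): for each k ∈ {1,…,m} there are distinct indices i^k₁,…,i^k_{j_k} ∈ {0,…,L−1} with a_{i^k_{s+1}} − a_{i^k_s} = d for all 1 ≤ s ≤ j_k −1, where the index sets {i^k₁,…,i^k_{j_k}} for different k are pairwise disjoint and j₁ ≥ j₂ ≥ … ≥ j_m ≥ 1. Then p ≥ 2L − 1 + (1/2)(j₁−1)(j₁−2) + Σ_{k=2}^{m} j_k(j_k−1)/2. -/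
/-!
Call `a i - b i` the diagonal values and `a i - b k` with `i ≠ k` the off-diagonal ones. The bound
comes from exhibiting enough entries of `M₈` with pairwise distinct values in `ZMod p`:

* the `L` diagonal entries;
* for each progression `k`, the `j k * (j k - 1) / 2` entries whose row is a later term and whose
  column is an earlier term of progression `k`;
* the `L - j₁` entries in the row of the last term of the first (longest) progression, of length
  `j₁`, whose column does not belong to that progression.

Validity separates the diagonal entries from everything else. Entries of the last family share a
row, so they differ because `b` is injective. If two other entries of the last two families had
the same value, moving both rows back by the same number of steps along their progressions would
subtract the same multiple of `d` from both values; moving far enough for one of the entries to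
reach the diagonal, validity forces the other to be that same diagonal entry (`shift_back`). The
last family has room for this move because the first progression is the longest.
-/

/-- If the entry in row `idx k t` and column `c` has the same value as an entry in row `idx l t'`
and column `idx l s'`, `s' ≤ t'`, then, provided progression `k` can be followed back
`t' - s'` steps from `t`, doing so leads to row `idx l s'`, and `c = idx l s'` as well: both
entries become the same diagonal entry. -/
theorem shift_back {L p m : ℕ} {a b : Fin L → ZMod p}
    (hvalid1 : ∀ i j k : Fin L, (j, k) ≠ (i, i) → a i - b i ≠ a j - b k)
    {d : ZMod p} {j : Fin m → ℕ} {idx : (k : Fin m) → Fin (j k) → Fin L}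
    (hAP : ∀ k : Fin m, ∀ s : ℕ, (hs : s + 1 < j k) →
      a (idx k ⟨s + 1, hs⟩) - a (idx k ⟨s, by omega⟩) = d)
    (k l : Fin m) (t : ℕ) (ht : t < j k) (c : Fin L) (t' s' : ℕ) (ht' : t' < j l)
    (hst : s' ≤ t') (hle : t' - s' ≤ t)
    (h : a (idx k ⟨t, ht⟩) - b c = a (idx l ⟨t', ht'⟩) - b (idx l ⟨s', by omega⟩)) :
    idx k ⟨t - (t' - s'), by omega⟩ = idx l ⟨s', by omega⟩ ∧ c = idx l ⟨s', by omega⟩ := by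
  have steps : ∀ (k : Fin m) (u s : ℕ) (hs : s + u < j k),
      a (idx k ⟨s + u, hs⟩) = a (idx k ⟨s, by omega⟩) + u * d := by
    intro k u
    induction u with
    | zero => intro s hs; simp
    | succ u ih =>
      intro s hs
      have h1 := hAP k (s + u) (by omega)
      have h2 := ih s (by omega)
      rw [h2] at h1
      push_cast
      have h3 : a (idx k ⟨s + (u + 1), hs⟩) = a (idx k ⟨s + u + 1, by omega⟩) := rfl
      rw [h3]
      linear_combination h1
  obtain ⟨u, rfl⟩ := Nat.exists_eq_add_of_le hst
  obtain ⟨v, rfl⟩ : ∃ v, t = v + u := ⟨t - u, by omega⟩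
  have e1 := steps k u v ht
  have e2 := steps l u s' ht'
  have e3 : v + u - (s' + u - s') = v := by omega
  simp only [e3]
  by_contra hne
  -- Going back `u` steps turns the right-hand entry into the diagonal entry of index `idx l s'`.
  refine hvalid1 (idx l ⟨s', by omega⟩) (idx k ⟨v, by omega⟩) c ?_ ?_
  · rwa [ne_eq, Prod.mk.injEq]
  · linear_combination -h + e1 - e2


/-- Fix `d ≠ 0` in `ZMod p`. If the girth-8 matrix `M₈` is valid and there
are `m` pairwise index-disjoint arithmetic subsequences of `a` with common difference `d`,
of lengths `j 0 ≥ j 1 ≥ … ≥ j (m-1) ≥ 1`, then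
`p ≥ 2L - 1 + (1/2)(j₁-1)(j₁-2) + Σ_{k=2}^{m} j_k(j_k-1)/2`. -/
theorem stmt_2 (L p : ℕ) (hL : 2 ≤ L) (hp : 2 ≤ p)
    (a b : Fin L → ZMod p)
    (ha0 : a ⟨0, by omega⟩ = 0) (hb0 : b ⟨0, by omega⟩ = 0)
    (hvalid1 : ∀ i j k : Fin L, (j, k) ≠ (i, i) → a i - b i ≠ a j - b k)
    (hvalid2 : Function.Injective a)
    (hvalid3 : Function.Injective b)
    (d : ZMod p) (hd : d ≠ 0)
    (m : ℕ) (hm : 1 ≤ m)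
    (j : Fin m → ℕ) (hj1 : ∀ k : Fin m, 1 ≤ j k)
    (hjmono : ∀ k l : Fin m, k ≤ l → j l ≤ j k)
    (idx : (k : Fin m) → Fin (j k) → Fin L)
    (hinj : ∀ k : Fin m, Function.Injective (idx k))
    (hdisj : ∀ k l : Fin m, k ≠ l → ∀ (s : Fin (j k)) (t : Fin (j l)), idx k s ≠ idx l t)
    (hAP : ∀ k : Fin m, ∀ s : ℕ, (hs : s + 1 < j k) →
      a (idx k ⟨s + 1, hs⟩) - a (idx k ⟨s, by omega⟩) = d) :
    2 * (L : ℚ) - 1 + ((j ⟨0, by omega⟩ : ℚ) - 1) * ((j ⟨0, by omega⟩ : ℚ) - 2) / 2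
      + ∑ k ∈ Finset.univ.erase (⟨0, by omega⟩ : Fin m),
          (j k : ℚ) * ((j k : ℚ) - 1) / 2 ≤ (p : ℚ) := by
  classical
  have hne : NeZero p := ⟨by omega⟩
  set z : Fin m := ⟨0, by omega⟩ with hz
  have hmax : ∀ l, j l ≤ j z := fun l => hjmono z l (Fin.mk_le_mk.mpr (Nat.zero_le _))
  have hz1 := hj1 z
  -- `⟨k, t, s⟩` with `s < t < j k` stands for the entry in row `idx k t` and column `idx k s`.
  let T := (Σ k : Fin m, Σ t : Fin (j k), Fin t)
  let R := {c : Fin L // c ∉ Set.range (idx z)}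
  let f : T → ZMod p := fun x =>
    a (idx x.1 x.2.1) - b (idx x.1 ⟨x.2.2, x.2.2.2.trans x.2.1.2⟩)
  let g : R → ZMod p := fun c => a (idx z ⟨j z - 1, by omega⟩) - b c.1
  let D : Fin L → ZMod p := fun i => a i - b i
  have hD : Function.Injective D := by
    intro i i' h
    by_contra hii
    exact hvalid1 i i' i' (by simpa using fun h => hii h.symm) h
  have hf : Function.Injective f := by
    -- It suffices to compare two entries with the one of larger row-column gap first: shifting
    -- both back by the smaller gap stays inside both progressions.
    have main : ∀ x y : T, (y.2.1 : ℕ) - y.2.2 ≤ x.2.1 - x.2.2 → f x = f y → x = y := by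
      rintro ⟨k, ⟨t, ht⟩, ⟨s, hs⟩⟩ ⟨l, ⟨t', ht'⟩, ⟨s', hs'⟩⟩ hle h
      simp only at hs hs' hle
      obtain ⟨h1, h2⟩ := shift_back hvalid1 hAP k l t ht (idx k ⟨s, hs.trans ht⟩) t' s' ht'
        hs'.le (by omega) h
      have hkl : k = l := by
        by_contra hkl
        exact hdisj k l hkl _ _ h2
      subst hkl
      have h3 := Fin.mk.inj_iff.mp (hinj k h2)
      have h4 := Fin.mk.inj_iff.mp (hinj k h1)
      subst h3
      have h5 : t = t' := by omega
      subst h5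
      rfl
    intro x y h
    rcases le_total ((y.2.1 : ℕ) - y.2.2) (x.2.1 - x.2.2) with hle | hle
    · exact main x y hle h
    · exact (main y x hle h.symm).symm
  have hg : Function.Injective g := by
    intro c c' h
    exact Subtype.ext (hvalid3 (sub_right_injective h))
  have hfg : ∀ x c, f x ≠ g c := by
    rintro ⟨l, ⟨t', ht'⟩, ⟨s', hs'⟩⟩ ⟨c, hc⟩ h
    simp only at hs'
    have hl := hmax l
    obtain ⟨h1, h2⟩ := shift_back hvalid1 hAP z l (j z - 1) (by omega) c t' s' ht'
      hs'.le (by omega) h.symm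
    exact hc ⟨_, h1.trans h2.symm⟩
  have hDf : ∀ i x, D i ≠ f x := by
    rintro i ⟨l, ⟨t', ht'⟩, ⟨s', hs'⟩⟩ h
    simp only at hs'
    refine hvalid1 i _ _ ?_ h
    intro he
    obtain ⟨h1, h2⟩ := Prod.mk.inj he
    have h3 : t' = s' := Fin.mk.inj_iff.mp (hinj l (h1.trans h2.symm))
    omega
  have hDg : ∀ i c, D i ≠ g c := by
    rintro i ⟨c, hc⟩ h
    refine hvalid1 i _ _ ?_ h
    intro he
    obtain ⟨h1, h2⟩ := Prod.mk.inj he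
    exact hc ⟨_, h1.trans h2.symm⟩
  have hinj_all : Function.Injective (Sum.elim D (Sum.elim f g)) := by
    refine hD.sumElim (hf.sumElim hg hfg) ?_
    rintro i (x | c)
    · exact hDf i x
    · exact hDg i c
  have hcard := Fintype.card_le_of_injective _ hinj_all
  have hR : Fintype.card R = L - j z := by
    have h1 := Fintype.card_subtype_compl (fun c => c ∈ Set.range (idx z))
    have h2 : Fintype.card {c // c ∈ Set.range (idx z)} = j z := by
      rw [← Fintype.card_congr (Equiv.ofInjective _ (hinj z)), Fintype.card_fin]
    rw [h2, Fintype.card_fin] at h1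
    exact h1
  have hjL : j z ≤ L := by simpa using Fintype.card_le_of_injective _ (hinj z)
  have hT : (Fintype.card T : ℚ) = ∑ k, (j k : ℚ) * ((j k : ℚ) - 1) / 2 := by
    have gauss : ∀ n : ℕ, ((∑ t : Fin n, (t : ℕ) : ℕ) : ℚ) = (n : ℚ) * ((n : ℚ) - 1) / 2 := by
      intro n
      induction n with
      | zero => simp
      | succ n ih =>
        rw [Fin.sum_univ_castSucc]
        push_cast at ih ⊢
        simp only [Fin.val_castSucc]
        rw [ih]
        ring
    simp only [T, Fintype.card_sigma, Fintype.card_fin]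
    rw [Nat.cast_sum]
    exact Finset.sum_congr rfl fun k _ => gauss (j k)
  rw [Fintype.card_sum, Fintype.card_sum, Fintype.card_fin, ZMod.card, hR] at hcard
  have hq : (L : ℚ) + (Fintype.card T + ((L : ℚ) - j z)) ≤ p := by
    rw [← Nat.cast_sub hjL]
    exact_mod_cast hcard
  rw [hT, ← Finset.add_sum_erase _ _ (Finset.mem_univ z)] at hq
  linarith
end

section
/- Fix d ∈ ℤ/pℤ with d ≠ 0. Suppose the girth-8 matrix M₈ is valid and there exist m pairwise distinct ordered pairs (s₁,t₁),…,(s_m,t_m) of indices in {0,…,L−1} with s_k ≠ t_k and a_{t_k} − a_{s_k} = d for every k ∈ {1,…,m}. Then p ≥ 2L + m − 2. -/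
/-!
The bound comes from exhibiting enough distinct residues. Any pair `(s, t)` with `a t - a s = d`
gives three families in `ZMod p`:

* the row `a s - b j`, with `L` values;
* the entries `a t - b (t_q)` of row `t`, one for each of the `m` pairs `(s_q, t_q)`;
* the diagonal values `a i - b i` with `i ≠ s, t`, at least `L - 2` of them.

The diagonal values are pairwise distinct and avoid rows `s` and `t` by validity. The second family
avoids row `s`: if `a t - b (t_q) = a s - b l`, then adding `a (s_q) - a s = a (t_q) - a t` to
both sides gives `a (t_q) - b (t_q) = a (s_q) - b l`, so a diagonal entry is repeated in
another row. Altogether `L + m + (L - 2) ≤ p`. When there is no pair, row `0` and the remaining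
`L - 1` diagonal values suffice.
-/

/-- Fix `d ≠ 0` in `ZMod p`. If the girth-8 matrix `M₈` is valid and there
are `m` pairwise distinct ordered pairs `(s_k, t_k)` of indices with `s_k ≠ t_k` and
`a (t_k) - a (s_k) = d` for all `k`, then `p ≥ 2L + m - 2`. -/
theorem stmt_3 (L p : ℕ) (hL : 2 ≤ L) (hp : 2 ≤ p)
    (a b : Fin L → ZMod p)
    (ha0 : a ⟨0, by omega⟩ = 0) (hb0 : b ⟨0, by omega⟩ = 0)
    (hvalid1 : ∀ i j k : Fin L, (j, k) ≠ (i, i) → a i - b i ≠ a j - b k)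
    (hvalid2 : Function.Injective a)
    (hvalid3 : Function.Injective b)
    (d : ZMod p) (hd : d ≠ 0)
    (m : ℕ)
    (pairs : Fin m → Fin L × Fin L)
    (hpairs_inj : Function.Injective pairs)
    (hpairs_ne : ∀ k : Fin m, (pairs k).1 ≠ (pairs k).2)
    (hpairs_d : ∀ k : Fin m, a (pairs k).2 - a (pairs k).1 = d) :
    2 * L + m ≤ p + 2 := by
  have : NeZero p := ⟨by omega⟩
  have diag : ∀ i j k, a i - b i = a j - b k → j = i ∧ k = i := by
    intro i j k h
    by_contra hne
    exact hvalid1 i j k (by simpa [Prod.ext_iff] using hne) h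
  rcases Nat.eq_zero_or_pos m with rfl | hm
  · let z : Fin L := ⟨0, by omega⟩
    let f : Fin L ⊕ {i : Fin L // i ≠ z} → ZMod p :=
      Sum.elim (fun j => a z - b j) (fun i => a i - b i)
    have hf : Function.Injective f := by
      refine Function.Injective.sumElim ?_ ?_ ?_
      · intro j k h
        exact hvalid3 (sub_right_injective h)
      · intro i j h
        exact Subtype.ext (diag _ _ _ h).1.symm
      · intro j i h
        exact i.2 (diag _ _ _ h.symm).1.symm
    have hc := Fintype.card_le_of_injective f hf
    simp only [Fintype.card_sum, Fintype.card_fin, ZMod.card, ne_eq, Fintype.card_subtype_compl,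
      Fintype.card_subtype_eq] at hc
    omega
  · obtain ⟨s, hs⟩ : ∃ s, s = (pairs ⟨0, hm⟩).1 := ⟨_, rfl⟩
    obtain ⟨t, ht⟩ : ∃ t, t = (pairs ⟨0, hm⟩).2 := ⟨_, rfl⟩
    have hst : a t - a s = d := by rw [hs, ht]; exact hpairs_d _
    -- The target of a pair determines its source, because `a` is injective.
    have htgt : Function.Injective fun q => (pairs q).2 := by
      intro q r h
      refine hpairs_inj (Prod.ext (hvalid2 ?_) h)
      have h1 := hpairs_d q
      have h2 := hpairs_d r
      simp only at h
      rw [h] at h1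
      exact sub_right_injective (h1.trans h2.symm)
    let f : Fin L ⊕ (Fin m ⊕ {i : Fin L // i ∉ ({s, t} : Finset (Fin L))}) → ZMod p :=
      Sum.elim (fun j => a s - b j)
        (Sum.elim (fun q => a t - b (pairs q).2) (fun i => a i - b i))
    have hf : Function.Injective f := by
      refine Function.Injective.sumElim ?_ (Function.Injective.sumElim ?_ ?_ ?_) ?_
      · intro j k h
        exact hvalid3 (sub_right_injective h)
      · intro q r h
        exact htgt (hvalid3 (sub_right_injective h))
      · intro i j h
        exact Subtype.ext (diag _ _ _ h).1.symm
      · intro q i h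
        apply i.2
        simp [(diag _ _ _ h.symm).1]
      · rintro j (q | i) h
        · simp only [Sum.elim_inl] at h
          have h1 : a (pairs q).2 - b (pairs q).2 = a (pairs q).1 - b j := by
            linear_combination hpairs_d q - hst - h
          exact hpairs_ne q (diag _ _ _ h1).1
        · apply i.2
          simp only [Sum.elim_inr] at h
          simp [(diag _ _ _ h.symm).1]
    have hc := Fintype.card_le_of_injective f hf
    have h2 : ({s, t} : Finset (Fin L)).card ≤ 2 := Finset.card_le_two
    simp only [Fintype.card_sum, Fintype.card_fin, ZMod.card, Fintype.card_subtype_compl,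
      Fintype.card_coe] at hc
    omega
end

section
/- Let L ≥ 4. If there exists a valid girth-8 matrix M₈ (equivalently, a (3,L) fully connected QC-LDPC code with lifting degree p and girth at least 8), then, as real numbers, p ≥ √(5L² − 11L + 13/2) + 1/2. -/
/-!
The proof gives the linear bound `5 * L ≤ 2 * p + 4`, which implies the quadratic one.

Write `A`, `B`, `D` for the sets of the `a i`, the `b i` and the diagonal entries `a i - b i`.
Row `i` has `L - 1` off-diagonal entries, all in the complement of `D`, which has `p - L` elements.
Hence two rows `i ≠ j` share at least `3 * L - 2 - p` entries, so the difference `a i - a j` has at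
least that many representations as a difference of elements of `B` (`card_reps_of_valid`); the same
holds with `A` and `B` exchanged. Suppose now that `5 * L > 2 * p + 4`. Then each element of
`A - A = B - B` has more than `L / 2` representations as a difference in `A`.

* Two such sets of representations meet, so `S = A - A` is closed under subtraction. It therefore
  contains `A`, `B`, `D` and all of row `0`, whence `|S| ≥ 2 * L - 1`.
* Counting the `L * (L - 1)` ordered pairs of distinct elements of `A` by their difference gives
  `(L / 2) * (|S| - 1) < L * (L - 1)`, that is `|S| < 2 * L - 1`.

These are incompatible.
-/

namespace GirthEight

variable {G : Type*} [AddCommGroup G] [DecidableEq G] {L : ℕ}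

/-- The indices `k` for which `a k` is the minuend of a representation `x = a k - a l`. When `a` is
injective, its cardinality is the number of representations of `x` as a difference of values. -/
def reps (a : Fin L → G) (x : G) : Finset (Fin L) :=
  Finset.univ.filter fun k => ∃ l, a k - a l = x

theorem mem_reps {a : Fin L → G} {x : G} {k : Fin L} :
    k ∈ reps a x ↔ ∃ l, a k - a l = x := by
  simp [reps]

/-- With `card_diag` and `card_row`, this produces `2 * L - 1` distinct entries: the diagonal and the
rest of row `i`. -/
theorem disjoint_diag_row {a b : Fin L → G}
    (h : ∀ i j k : Fin L, (j, k) ≠ (i, i) → a i - b i ≠ a j - b k) (i : Fin L) :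
    Disjoint (Finset.univ.image fun k => a k - b k)
      ((Finset.univ.erase i).image fun k => a i - b k) := by
  rw [Finset.disjoint_left]
  intro x hx hx'
  simp only [Finset.mem_image, Finset.mem_univ, true_and, Finset.mem_erase, and_true] at hx hx'
  obtain ⟨k, rfl⟩ := hx
  obtain ⟨l, hl, hkl⟩ := hx'
  refine h k i l ?_ hkl.symm
  rintro hp
  simp only [Prod.mk.injEq] at hp
  exact hl (hp.2.trans hp.1.symm)

theorem card_diag {a b : Fin L → G}
    (h : ∀ i j k : Fin L, (j, k) ≠ (i, i) → a i - b i ≠ a j - b k) :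
    (Finset.univ.image fun k => a k - b k).card = L := by
  rw [Finset.card_image_of_injective, Finset.card_univ, Fintype.card_fin]
  intro i j hij
  by_contra hne
  exact h i j j (fun hp => hne (Prod.mk.inj hp).1.symm) hij

theorem card_row {a b : Fin L → G} (hb : Function.Injective b) (i : Fin L) :
    ((Finset.univ.erase i).image fun k => a i - b k).card = L - 1 := by
  rw [Finset.card_image_of_injective, Finset.card_erase_of_mem (Finset.mem_univ _),
    Finset.card_univ, Fintype.card_fin]
  intro k l hkl
  exact hb (sub_right_injective hkl)

/-- Two rows, each with `L - 1` off-diagonal entries lying in a set of `|G| - L` elements, share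
at least `3 * L - 2 - |G|` of them; each common entry `a i - b k = a j - b l` is a representation
`a i - a j = b k - b l`. -/
theorem card_reps_of_valid [Fintype G] {a b : Fin L → G}
    (h : ∀ i j k : Fin L, (j, k) ≠ (i, i) → a i - b i ≠ a j - b k)
    (hb : Function.Injective b) (i j : Fin L) :
    3 * L ≤ Fintype.card G + 2 + (reps b (a i - a j)).card := by
  set D := Finset.univ.image fun k => a k - b k with hD
  set R : Fin L → Finset G := fun i => (Finset.univ.erase i).image fun k => a i - b k with hR
  have hinter : (R i ∩ R j).card ≤ (reps b (a i - a j)).card := by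
    refine (Finset.card_le_card ?_).trans
      (Finset.card_image_le (s := reps b (a i - a j)) (f := fun k => a i - b k))
    intro x hx
    simp only [hR, Finset.mem_inter, Finset.mem_image] at hx
    obtain ⟨⟨k, -, rfl⟩, l, -, hl⟩ := hx
    refine Finset.mem_image_of_mem _ (mem_reps.2 ⟨l, ?_⟩)
    have : a j = a i - b k + b l := by rw [← hl]; abel
    rw [this]; abel
  have hdisj : Disjoint D (R i ∪ R j) :=
    Finset.disjoint_union_right.2 ⟨disjoint_diag_row h i, disjoint_diag_row h j⟩
  have hle : (D ∪ (R i ∪ R j)).card ≤ Fintype.card G := Finset.card_le_univ _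
  rw [Finset.card_union_of_disjoint hdisj, card_diag h] at hle
  have hui := Finset.card_union_add_card_inter (R i) (R j)
  have hi : (R i).card = L - 1 := card_row hb i
  have hj : (R j).card = L - 1 := card_row hb j
  omega

/-- If the bound failed, the difference set `S` of the `a i` would be closed under subtraction, hence
large enough to hold the diagonal and row `0`, yet small because each of its elements has more than
`L / 2` representations. -/
theorem linear_bound [Fintype G] {a b : Fin L → G} (hL : 0 < L)
    (ha0 : a ⟨0, hL⟩ = 0) (hb0 : b ⟨0, hL⟩ = 0)
    (h : ∀ i j k : Fin L, (j, k) ≠ (i, i) → a i - b i ≠ a j - b k)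
    (ha : Function.Injective a) (hb : Function.Injective b) :
    5 * L ≤ 2 * Fintype.card G + 4 := by
  by_contra! hlt
  have h' : ∀ i j k : Fin L, (j, k) ≠ (i, i) → b i - a i ≠ b j - a k := by
    intro i j k hjk he
    refine h i k j (fun hp => hjk ?_) ?_
    · simp only [Prod.mk.injEq] at hp ⊢
      exact hp.symm
    · rw [← neg_sub, he, neg_sub]
  have hrb : ∀ i j, L < 2 * (reps b (a i - a j)).card := fun i j => by
    have := card_reps_of_valid h hb i j
    omega
  have hra' : ∀ i j, L < 2 * (reps a (b i - b j)).card := fun i j => by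
    have := card_reps_of_valid h' ha i j
    omega
  set S : Finset G := Finset.univ.image fun q : Fin L × Fin L => a q.1 - a q.2 with hS
  have memS : ∀ x, x ∈ S ↔ ∃ i j, a i - a j = x := fun x => by simp [hS]
  have hbS : ∀ i j, b i - b j ∈ S := fun i j => by
    have hpos : 0 < (reps a (b i - b j)).card := by
      have := hra' i j
      omega
    obtain ⟨k, hk⟩ := Finset.card_pos.1 hpos
    obtain ⟨l, hl⟩ := mem_reps.1 hk
    exact (memS _).2 ⟨k, l, hl⟩
  have hra : ∀ x ∈ S, L < 2 * (reps a x).card := by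
    intro x hx
    obtain ⟨i, j, rfl⟩ := (memS x).1 hx
    have hpos : 0 < (reps b (a i - a j)).card := by
      have := hrb i j
      omega
    obtain ⟨k, hk⟩ := Finset.card_pos.1 hpos
    obtain ⟨l, hl⟩ := mem_reps.1 hk
    rw [← hl]
    exact hra' k l
  have hsub : ∀ x ∈ S, ∀ y ∈ S, x - y ∈ S := by
    intro x hx y hy
    have hpos : 0 < (reps a x ∩ reps a y).card := by
      have h1 := Finset.card_union_add_card_inter (reps a x) (reps a y)
      have h2 := Finset.card_le_univ (reps a x ∪ reps a y)
      rw [Fintype.card_fin] at h2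
      have := hra x hx
      have := hra y hy
      omega
    obtain ⟨k, hk⟩ := Finset.card_pos.1 hpos
    rw [Finset.mem_inter, mem_reps, mem_reps] at hk
    obtain ⟨⟨l, rfl⟩, m, rfl⟩ := hk
    exact (memS _).2 ⟨m, l, by abel⟩
  have haS : ∀ i, a i ∈ S := fun i => (memS _).2 ⟨i, ⟨0, hL⟩, by rw [ha0, sub_zero]⟩
  have hbS' : ∀ i, b i ∈ S := fun i => by
    have := hbS i ⟨0, hL⟩
    rwa [hb0, sub_zero] at this
  have hlower : L + (L - 1) ≤ S.card := by
    rw [← card_row (a := a) hb ⟨0, hL⟩]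
    nth_rw 1 [← card_diag h]
    rw [← Finset.card_union_of_disjoint (disjoint_diag_row h _)]
    refine Finset.card_le_card (Finset.union_subset ?_ ?_)
    · exact Finset.image_subset_iff.2 fun k _ => hsub _ (haS k) _ (hbS' k)
    · exact Finset.image_subset_iff.2 fun k _ => hsub _ (haS _) _ (hbS' k)
  have hcount : (L / 2 + 1) * (S.erase 0).card
      ≤ (Finset.univ : Finset (Fin L)).offDiag.card := by
    refine Finset.mul_card_image_le_card_of_maps_to (f := fun q => a q.1 - a q.2) ?_ _ ?_
    · intro q hq
      rw [Finset.mem_offDiag] at hq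
      exact Finset.mem_erase.2 ⟨sub_ne_zero.2 (ha.ne hq.2.2), (memS _).2 ⟨_, _, rfl⟩⟩
    · intro x hx
      obtain ⟨hx0, hxS⟩ := Finset.mem_erase.1 hx
      have h1 := hra x hxS
      refine le_trans (by omega : L / 2 + 1 ≤ (reps a x).card) ?_
      refine (Finset.card_le_card ?_).trans (Finset.card_image_le (f := Prod.fst))
      intro k hk
      obtain ⟨l, rfl⟩ := mem_reps.1 hk
      refine Finset.mem_image.2 ⟨(k, l), ?_, rfl⟩
      simp only [Finset.mem_filter, Finset.mem_offDiag, Finset.mem_univ, true_and, and_true]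
      rintro rfl
      exact hx0 (sub_self _)
  rw [Finset.offDiag_card, Finset.card_univ, Fintype.card_fin,
    Finset.card_erase_of_mem ((memS 0).2 ⟨⟨0, hL⟩, ⟨0, hL⟩, sub_self _⟩)] at hcount
  -- `5 * L > 2 * |G| + 4` with `|G| ≥ 1` excludes `L = 1`, so `L - 1` can be cancelled below.
  have hL2 : 2 ≤ L := by
    have : 0 < Fintype.card G := Fintype.card_pos_iff.2 ⟨0⟩
    omega
  obtain ⟨m, rfl⟩ : ∃ m, L = m + 2 := ⟨L - 2, by omega⟩
  have h1 : 2 * (m + 1) ≤ S.card - 1 := by omega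
  have h2 := (Nat.mul_le_mul_left ((m + 2) / 2 + 1) h1).trans hcount
  have h3 : m + 3 ≤ 2 * ((m + 2) / 2 + 1) := by omega
  have h4 : (m + 2) * (m + 2) - (m + 2) = (m + 2) * (m + 1) := by
    rw [← Nat.mul_sub_one]; rfl
  rw [h4] at h2
  nlinarith

end GirthEight


/-- Let `L ≥ 4`. If there exists a valid girth-8 matrix `M₈` (i.e. a
(3,L) fully connected QC-LDPC code with lifting degree `p` and girth at least 8),
then `p ≥ √(5L² - 11L + 13/2) + 1/2` as real numbers. -/
theorem stmt_4 (L p : ℕ) (hL : 4 ≤ L) (hp : 2 ≤ p)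
    (h : ∃ a b : Fin L → ZMod p,
      a ⟨0, by omega⟩ = 0 ∧ b ⟨0, by omega⟩ = 0 ∧
      (∀ i j k : Fin L, (j, k) ≠ (i, i) → a i - b i ≠ a j - b k) ∧
      Function.Injective a ∧ Function.Injective b) :
    Real.sqrt (5 * (L : ℝ) ^ 2 - 11 * L + 13 / 2) + 1 / 2 ≤ (p : ℝ) := by
  obtain ⟨a, b, ha0, hb0, hv, ha, hb⟩ := h
  have : NeZero p := ⟨by omega⟩
  have key := GirthEight.linear_bound (by omega) ha0 hb0 hv ha hb
  rw [ZMod.card] at key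
  have hkey : 5 * (L : ℝ) ≤ 2 * p + 4 := by exact_mod_cast key
  have hL' : (4 : ℝ) ≤ L := by exact_mod_cast hL
  rw [← le_sub_iff_add_le]
  apply Real.sqrt_le_iff.2
  constructor
  · linarith
  · -- `p - 1 / 2 ≥ (5 * L - 5) / 2`, whose square exceeds the radicand.
    have hsq : ((5 * (L : ℝ) - 5) / 2) ^ 2 ≤ ((p : ℝ) - 1 / 2) ^ 2 :=
      pow_le_pow_left₀ (by linarith) (by linarith) 2
    nlinarith
end

section
/- Let L ≥ 2 and define nonnegative integers c₀,…,c_{L−1} by c₀ = 0, c_i = (L+1)·i for 1 ≤ i ≤ ⌊(L−1)/2⌋, and c_i = (L+2)·(L−1−i) + 1 for ⌊(L−1)/2⌋+1 ≤ i ≤ L−1. Then for every integer p ≥ (1/2)L² + (1/2)L + ⌊(L−1)/2⌋, setting a_i = i mod p and b_i = −c_i mod p yields a valid girth-8 matrix M₈ over ℤ/pℤ; hence the corresponding (3,L) fully connected QC-LDPC code has girth at least 8. -/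
/-!
The entry `a j - b k` is the residue of the natural number `j + c k`. The lower bound on `p` is
exactly `max (j + c k) + 1`, so all these numbers lie in `[0, p)` (`add_c_lt`) and congruence modulo
`p` is equality of natural numbers. Equalities in `ℕ` are then settled by uniqueness of division
with remainder: with `t = L - 1 - i`, the diagonal values are `i + c i = (L + 1) i + i = (L + 2) i`
on the lower half and `i + c i = (L + 1) t + L = (L + 2) t + (L - t)` on the upper half, so one
divides by `L + 1` to compare with a `c k = (L + 1) k` from the lower half, and by `L + 2` to
compare with a `c k = (L + 2) (L - 1 - k) + 1` from the upper half.
-/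

theorem quot_rem_unique {q a b r s : ℕ} (hr : r < q) (hs : s < q) (h : q * a + r = q * b + s) :
    a = b ∧ r = s := by
  have hq : 0 < q := by omega
  have h1 := congrArg (· / q) h
  have h2 := congrArg (· % q) h
  simp only [Nat.mul_add_div hq, Nat.mul_add_mod, Nat.div_eq_of_lt, Nat.mod_eq_of_lt, hr, hs,
    add_zero] at h1 h2
  exact ⟨h1, h2⟩

/-- Equality holds at `j = L - 1` and `k = ⌊(L-1)/2⌋` for odd `L`, `k = ⌊(L-1)/2⌋ + 1` for
even `L`, when `p` is the least admissible value. -/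
theorem add_c_lt (L : ℕ) (c : Fin L → ℕ)
    (hc1 : ∀ i : Fin L, i.val ≤ (L - 1) / 2 → c i = (L + 1) * i.val)
    (hc2 : ∀ i : Fin L, (L - 1) / 2 < i.val → c i = (L + 2) * (L - 1 - i.val) + 1)
    (p : ℕ) (hp : L ^ 2 + L + 2 * ((L - 1) / 2) ≤ 2 * p) (j k : Fin L) :
    j.val + c k + 1 ≤ p := by
  have hj := j.isLt
  have hk := k.isLt
  obtain ⟨m, hm⟩ : ∃ m, m = (L - 1) / 2 := ⟨_, rfl⟩
  rw [← hm] at hp hc1 hc2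
  have hL : L = 2 * m + 1 ∨ L = 2 * m + 2 := by omega
  rcases le_or_gt k.val m with h | h
  · have := Nat.mul_le_mul_left (L + 1) h
    rw [hc1 k h]
    generalize j.val = x at *
    generalize k.val = y at *
    rcases hL with e | e <;> rw [e] at this hp hj ⊢ <;> nlinarith
  · rw [hc2 k h]
    rcases hL with e | e
    · have ht : L - 1 - k.val + 1 ≤ m := by omega
      have := Nat.mul_le_mul_left (L + 2) ht
      generalize L - 1 - k.val = t at *
      generalize j.val = x at *
      rw [e] at this hp hj ⊢; nlinarith
    · have ht : L - 1 - k.val ≤ m := by omega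
      have := Nat.mul_le_mul_left (L + 2) ht
      generalize L - 1 - k.val = t at *
      generalize j.val = x at *
      rw [e] at this hp hj ⊢; nlinarith

/-- Condition (1) before reduction modulo `p`. -/
theorem diag_unique (L : ℕ) (c : Fin L → ℕ)
    (hc1 : ∀ i : Fin L, i.val ≤ (L - 1) / 2 → c i = (L + 1) * i.val)
    (hc2 : ∀ i : Fin L, (L - 1) / 2 < i.val → c i = (L + 2) * (L - 1 - i.val) + 1)
    (i j k : Fin L) (h : i.val + c i = j.val + c k) : j = i ∧ k = i := by
  have hi := i.isLt
  have hj := j.isLt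
  have hk := k.isLt
  rw [Fin.ext_iff, Fin.ext_iff]
  rcases le_or_gt i.val ((L - 1) / 2) with h1 | h1 <;>
  rcases le_or_gt k.val ((L - 1) / 2) with h2 | h2
  · rw [hc1 i h1, hc1 k h2] at h
    have := quot_rem_unique (q := L + 1) (a := i.val) (b := k.val) (r := i.val) (s := j.val)
      (by omega) (by omega) (by linarith)
    omega
  · rw [hc1 i h1, hc2 k h2] at h
    have := quot_rem_unique (q := L + 2) (a := i.val) (b := L - 1 - k.val) (r := 0)
      (s := j.val + 1) (by omega) (by omega) (by linarith)
    omega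
  · rw [hc2 i h1, hc1 k h2] at h
    obtain ⟨t, ht⟩ : ∃ t, t = L - 1 - i.val := ⟨_, rfl⟩
    have hit : i.val + t + 1 = L := by omega
    rw [← ht] at h
    have := quot_rem_unique (q := L + 1) (a := t) (b := k.val) (r := L)
      (s := j.val) (by omega) (by omega) (by linarith)
    omega
  · rw [hc2 i h1, hc2 k h2] at h
    have := quot_rem_unique (q := L + 2) (a := L - 1 - i.val) (b := L - 1 - k.val)
      (r := i.val + 1) (s := j.val + 1) (by omega) (by omega) (by linarith)
    omega

theorem c_injective (L : ℕ) (c : Fin L → ℕ)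
    (hc1 : ∀ i : Fin L, i.val ≤ (L - 1) / 2 → c i = (L + 1) * i.val)
    (hc2 : ∀ i : Fin L, (L - 1) / 2 < i.val → c i = (L + 2) * (L - 1 - i.val) + 1) :
    Function.Injective c := by
  -- The remainder of `c i` modulo `L + 1` is `0` on the lower half and `L - i > 0` on the upper.
  have key : ∀ i : Fin L, ∃ a r, c i = (L + 1) * a + r ∧ r < L + 1 ∧
      ((i.val ≤ (L - 1) / 2 ∧ a = i.val ∧ r = 0) ∨
        ((L - 1) / 2 < i.val ∧ r = L - i.val)) := by
    intro i
    have hi := i.isLt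
    rcases le_or_gt i.val ((L - 1) / 2) with h | h
    · exact ⟨i.val, 0, by rw [hc1 i h]; rfl, by omega, Or.inl ⟨h, rfl, rfl⟩⟩
    · refine ⟨L - 1 - i.val, L - i.val, ?_, by omega, Or.inr ⟨h, rfl⟩⟩
      have e : L - i.val = L - 1 - i.val + 1 := by omega
      rw [hc2 i h, e]; ring
  intro i k h
  obtain ⟨a, r, e, hr, hi⟩ := key i
  obtain ⟨b, s, f, hs, hk⟩ := key k
  have := quot_rem_unique hr hs (by rw [← e, ← f, h])
  have := i.isLt
  have := k.isLt
  ext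
  omega

/-- (Construction for `d = 1`.) With `c i = (L+1)·i` for
`0 ≤ i ≤ ⌊(L-1)/2⌋` and `c i = (L+2)·(L-1-i) + 1` for `⌊(L-1)/2⌋+1 ≤ i ≤ L-1`, for every
`p ≥ (1/2)L² + (1/2)L + ⌊(L-1)/2⌋`, setting `a i = i mod p` and `b i = -c i mod p`
yields a valid girth-8 matrix over `ZMod p`. -/
theorem stmt_6 (L : ℕ) (hL : 2 ≤ L)
    (c : Fin L → ℕ)
    (hc1 : ∀ i : Fin L, i.val ≤ (L - 1) / 2 → c i = (L + 1) * i.val)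
    (hc2 : ∀ i : Fin L, (L - 1) / 2 < i.val → c i = (L + 2) * (L - 1 - i.val) + 1)
    (p : ℕ)
    (hp : ((L : ℚ) ^ 2 / 2 + (L : ℚ) / 2 + (((L - 1) / 2 : ℕ) : ℚ)) ≤ (p : ℚ)) :
    (∀ i j k : Fin L, (j, k) ≠ (i, i) →
        ((i.val : ZMod p) - (-(c i : ZMod p))) ≠ ((j.val : ZMod p) - (-(c k : ZMod p)))) ∧
      Function.Injective (fun i : Fin L => (i.val : ZMod p)) ∧
      Function.Injective (fun j : Fin L => (-(c j : ZMod p) : ZMod p)) := by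
  have hp' : L ^ 2 + L + 2 * ((L - 1) / 2) ≤ 2 * p := by
    have : ((L ^ 2 + L + 2 * ((L - 1) / 2) : ℕ) : ℚ) ≤ ((2 * p : ℕ) : ℚ) := by
      rw [Nat.cast_add, Nat.cast_add, Nat.cast_mul, Nat.cast_mul, Nat.cast_pow]
      rw [Nat.cast_ofNat]
      linarith
    exact_mod_cast this
  have hlt := add_c_lt L c hc1 hc2 p hp'
  have cast_inj : ∀ x y : ℕ, x < p → y < p → (x : ZMod p) = (y : ZMod p) → x = y := by
    intro x y hx hy h
    rw [ZMod.natCast_eq_natCast_iff] at h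
    exact Nat.ModEq.eq_of_lt_of_lt h hx hy
  refine ⟨?_, ?_, ?_⟩
  · intro i j k hne h
    rw [sub_neg_eq_add, sub_neg_eq_add] at h
    have h' := cast_inj (i.val + c i) (j.val + c k) (hlt i i) (hlt j k) (by exact_mod_cast h)
    obtain ⟨rfl, rfl⟩ := diag_unique L c hc1 hc2 i j k h'
    exact hne rfl
  · intro i j h
    have hi := hlt i i
    have hj := hlt j j
    exact Fin.ext (cast_inj i.val j.val (by omega) (by omega) h)
  · intro i j h
    have hi := hlt i i
    have hj := hlt j j
    exact c_injective L c hc1 hc2 (cast_inj (c i) (c j) (by omega) (by omega) (neg_injective h))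
end

section
/- (Case r = 0.) Let d ≥ 2, q ≥ 1, r = 0, L = 2qd, and let c₀,…,c_{L−1} be as in the general d ≥ 2 construction, with the additional restriction c_{qd−1} = (q−1)d(L+1) + 1 (i.e., the permutation of the last group of the first half sends d−1 to 1). Then for every integer p ≥ (1/2)L² + (1/2)L + (1/2)Ld − 2d + 2, setting a_i = i·d mod p and b_i = −c_i mod p yields a valid girth-8 matrix M₈ over ℤ/pℤ, hence a (3,L) fully connected QC-LDPC code with girth at least 8. -/
/-!
Put `N = L + 1`. An index `i < q d` of the first half satisfies `c i = e + (i / d) d N` with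
`e < d`, and within one group of `d` consecutive indices the residues `e` are distinct.
By the symmetry `c (L-1-i) = c i + (i+1) d`, every matrix entry `j d + c k` and every diagonal entry
`i d + c i` has the form `c m + x d` with `m` in the first half; the diagonal entries are those with
`x = m` or `x = L`.

An equality `c m + x d = c n + y d` of natural numbers forces the residues mod `d` to agree, and
then `(m / d) N + x = (n / d) N + y`. Hence either `m = n` and `x = y`, or `x` and `y` differ by at
least `N` in the direction determined by the order of `m` and `n` (`shift_cases`). The ranges of
`x` and `y` then rule out all coincidences of a diagonal entry with another entry.

Since `c (q d - 1)` has residue `1`, the largest entry is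
`(q-1) d N + q d² + 1 + (L-1) d`, exactly one less than the bound on `p`, so equality of entries
mod `p` is equality of natural numbers. Injectivity of `a` and `b` follows from the diagonal
condition: `a i = a j` would make entry `(j, i)` equal to entry `(i, i)`, and similarly for `b`.
-/

/-- The comparison of two first-half values shifted by multiples of `d`. Here `u`, `v` stand for
`c m`, `c n`, and `hinj` says that values in one group of `d` indices are distinct. -/
lemma shift_cases {d N m n u v x y : ℕ}
    (hu : ∃ e < d, u = e + m / d * d * N) (hv : ∃ e < d, v = e + n / d * d * N)
    (hinj : m / d = n / d → u = v → m = n) (h : u + x * d = v + y * d) :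
    (m = n ∧ x = y) ∨ (n < m ∧ x + N ≤ y) ∨ (m < n ∧ y + N ≤ x) := by
  obtain ⟨e, he, rfl⟩ := hu
  obtain ⟨f, hf, rfl⟩ := hv
  have h' : e + d * (m / d * N + x) = f + d * (n / d * N + y) := by linarith
  have hef : e = f := by
    have := congrArg (· % d) h'
    simpa [Nat.add_mul_mod_self_left, Nat.mod_eq_of_lt he, Nat.mod_eq_of_lt hf] using this
  subst hef
  have hg : m / d * N + x = n / d * N + y :=
    Nat.eq_of_mul_eq_mul_left (by omega : 0 < d) (by omega)
  rcases lt_trichotomy (m / d) (n / d) with hlt | heq | hlt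
  · right; right
    refine ⟨lt_of_not_ge fun hle => absurd (Nat.div_le_div_right (c := d) hle) (by omega), ?_⟩
    nlinarith [Nat.mul_le_mul_right N hlt]
  · left
    exact ⟨hinj heq (by rw [heq]), by rw [heq] at hg; omega⟩
  · right; left
    refine ⟨lt_of_not_ge fun hle => absurd (Nat.div_le_div_right (c := d) hle) (by omega), ?_⟩
    nlinarith [Nat.mul_le_mul_right N hlt]


/-- (Construction for `d ≥ 2`, case `r = 0`, so `L = 2qd`.)
With `c` as in the general `d ≥ 2` construction and the additional restriction
`c (qd-1) = (q-1)d(L+1) + 1`, for every `p ≥ (1/2)L² + (1/2)L + (1/2)Ld - 2d + 2`,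
setting `a i = i·d mod p` and `b i = -c i mod p` yields a valid girth-8 matrix over
`ZMod p`. -/
theorem stmt_7 (d q L : ℕ) (hd : 2 ≤ d) (hq : 1 ≤ q) (hLdef : L = 2 * q * d)
    (c : Fin L → ℕ)
    (π₀ : Equiv.Perm (Fin d)) (hπ₀ : π₀ ⟨0, by omega⟩ = ⟨0, by omega⟩)
    (hfirst : ∀ i : Fin L, ∀ h : i.val < d, c i = (π₀ ⟨i.val, h⟩ : Fin d).val)
    (π : ℕ → Equiv.Perm (Fin d))
    (hgroups : ∀ i : Fin L, ∀ j k : ℕ, 1 ≤ j → j ≤ q - 1 → ∀ hk : k < d,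
      i.val = j * d + k → c i = ((π j) ⟨k, hk⟩ : Fin d).val + j * d * (L + 1))
    (hsym : ∀ i i' : Fin L, i.val < q * d → i'.val = L - 1 - i.val →
      c i' = c i + (i.val + 1) * d)
    (hlast : ∀ i : Fin L, i.val = q * d - 1 → c i = (q - 1) * d * (L + 1) + 1)
    (p : ℕ)
    (hp : (L : ℚ) ^ 2 / 2 + (L : ℚ) / 2 + (L : ℚ) * d / 2 - 2 * d + 2 ≤ (p : ℚ)) :
    (∀ i j k : Fin L, (j, k) ≠ (i, i) →
        ((i.val * d : ℕ) : ZMod p) - (-(c i : ZMod p)) ≠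
          ((j.val * d : ℕ) : ZMod p) - (-(c k : ZMod p))) ∧
      Function.Injective (fun i : Fin L => ((i.val * d : ℕ) : ZMod p)) ∧
      Function.Injective (fun j : Fin L => (-(c j : ZMod p) : ZMod p)) := by
  have hL : L = q * d + q * d := by rw [hLdef]; ring
  have hdq : d ≤ q * d := Nat.le_mul_of_pos_left d hq
  have hdlt : ∀ i : ℕ, i < q * d → i / d ≤ q - 1 := fun i hi => by
    have := (Nat.div_lt_iff_lt_mul (by omega : 0 < d)).2 hi
    omega
  -- Both kinds of group are given by a permutation `σ` of the residues.
  have hperm : ∀ g : ℕ, g ≤ q - 1 → ∃ σ : Equiv.Perm (Fin d), ∀ i : Fin L, i.val / d = g →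
      c i = (σ ⟨i.val % d, Nat.mod_lt _ (by omega)⟩).val + g * d * (L + 1) := by
    intro g hg
    rcases Nat.eq_zero_or_pos g with rfl | hpos
    · refine ⟨π₀, fun i hi => ?_⟩
      have hid : i.val < d := (Nat.div_eq_zero_iff_lt (by omega)).1 hi
      rw [hfirst i hid]
      simp [Nat.mod_eq_of_lt hid]
    · refine ⟨π g, fun i hi => ?_⟩
      refine hgroups i g (i.val % d) hpos hg _ ?_
      rw [← hi, Nat.div_add_mod' i.val d]
  have hform : ∀ i : Fin L, i.val < q * d → ∃ e < d, c i = e + i.val / d * d * (L + 1) := by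
    intro i hi
    obtain ⟨σ, hσ⟩ := hperm _ (hdlt i hi)
    exact ⟨_, Fin.is_lt _, hσ i rfl⟩
  have hinj : ∀ i k : Fin L, i.val < q * d → i.val / d = k.val / d → c i = c k →
      i.val = k.val := by
    intro i k hi hik hc
    obtain ⟨σ, hσ⟩ := hperm _ (hdlt i hi)
    rw [hσ i rfl, hσ k hik.symm] at hc
    have hmod : i.val % d = k.val % d := by
      have := σ.injective (Fin.ext (Nat.add_right_cancel hc))
      simpa using this
    rw [← Nat.div_add_mod i.val d, ← Nat.div_add_mod k.val d, hik, hmod]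
  have hcases : ∀ i : Fin L, i.val < q * d ∨
      ∃ m : Fin L, m.val < q * d ∧ i.val = L - 1 - m.val ∧ c i = c m + (m.val + 1) * d := by
    intro i
    by_cases hi : i.val < q * d
    · exact Or.inl hi
    · right
      have := i.isLt
      refine ⟨⟨L - 1 - i.val, by omega⟩, by simp only; omega, by simp only; omega, ?_⟩
      exact hsym _ _ (by simp only; omega) (by simp only; omega)
  have hfirstbound : ∀ i : Fin L, i.val < q * d → c i + 1 ≤ (q - 1) * d * (L + 1) + d := by
    intro i hi
    obtain ⟨e, he, h⟩ := hform i hi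
    have : i.val / d * d * (L + 1) ≤ (q - 1) * d * (L + 1) := by
      gcongr
      exact hdlt i hi
    omega
  have hcbound : ∀ i : Fin L, c i ≤ (q - 1) * d * (L + 1) + q * d * d + 1 := by
    intro i
    rcases hcases i with hi | ⟨m, hm, -, hc⟩
    · have := hfirstbound i hi
      have : q * d ≤ q * d * d := Nat.le_mul_of_pos_right _ (by omega)
      omega
    · by_cases hml : m.val = q * d - 1
      · -- The residue `1` imposed at `q d - 1` is what keeps this value small.
        have h1 := hlast m hml
        rw [hc, h1, hml, Nat.sub_add_cancel (by omega)]
        omega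
      · have h1 := hfirstbound m hm
        have h2 : (m.val + 2) * d ≤ q * d * d := Nat.mul_le_mul_right d (by omega)
        rw [hc]
        nlinarith
  have hpN : q * d * (L + 1) + q * d * d + 2 ≤ p + 2 * d := by
    have hLQ : (L : ℚ) = 2 * q * d := by rw [hLdef]; push_cast; ring
    have : ((q * d * (L + 1) + q * d * d + 2 : ℕ) : ℚ) ≤ ((p + 2 * d : ℕ) : ℚ) := by
      push_cast
      rw [hLQ] at hp ⊢
      linarith
    exact_mod_cast this
  have hlt : ∀ j k : Fin L, j.val * d + c k < p := by
    intro j k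
    have h1 := hcbound k
    have h2 : (j.val + 1) * d ≤ L * d := Nat.mul_le_mul_right d j.isLt
    obtain ⟨t, rfl⟩ : ∃ t, q = t + 1 := ⟨q - 1, by omega⟩
    simp only [Nat.add_sub_cancel] at h1
    nlinarith
  have hnat : ∀ i j k : Fin L, i.val * d + c i = j.val * d + c k → j = i ∧ k = i := by
    intro i j k h
    have hi := i.isLt
    have hj := j.isLt
    rcases hcases i with hi1 | ⟨m, hm, him, hci⟩ <;>
      rcases hcases k with hk1 | ⟨n, hn, hkn, hck⟩
    · have := shift_cases (hform i hi1) (hform k hk1) (hinj i k hi1) (x := i) (y := j)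
        (by linarith)
      constructor <;> apply Fin.ext <;> omega
    · have := shift_cases (hform i hi1) (hform n hn) (hinj i n hi1) (x := i)
        (y := n.val + 1 + j.val) (by linarith)
      omega
    · -- In the second half the diagonal entry is `c m + L d`.
      have hLm : L = i.val + (m.val + 1) := by omega
      have := shift_cases (hform m hm) (hform k hk1) (hinj m k hm)
        (x := i.val + (m.val + 1)) (y := j) (by linarith)
      omega
    · have := shift_cases (hform m hm) (hform n hn) (hinj m n hm)
        (x := i.val + (m.val + 1)) (y := n.val + 1 + j.val) (by linarith)
      constructor <;> apply Fin.ext <;> omega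
  have hmain : ∀ i j k : Fin L,
      ((i.val * d : ℕ) : ZMod p) - (-(c i : ZMod p)) =
        ((j.val * d : ℕ) : ZMod p) - (-(c k : ZMod p)) → j = i ∧ k = i := by
    intro i j k h
    apply hnat
    rw [sub_neg_eq_add, sub_neg_eq_add, ← Nat.cast_add, ← Nat.cast_add,
      ZMod.natCast_eq_natCast_iff] at h
    exact Nat.ModEq.eq_of_lt_of_lt h (hlt i i) (hlt j k)
  refine ⟨fun i j k hne h => ?_, fun i j h => ?_, fun j k h => ?_⟩
  · obtain ⟨rfl, rfl⟩ := hmain i j k h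
    exact hne rfl
  · exact (hmain i j i (congrArg (· - (-(c i : ZMod p))) h)).1.symm
  · exact (hmain j j k (congrArg (((j.val * d : ℕ) : ZMod p) - ·) h)).2.symm
end

section
/- (Case 1 ≤ r ≤ d.) Let d ≥ 2, q ≥ 1, 1 ≤ r ≤ d, L = 2qd + r, and let c₀,…,c_{L−1} be as in the general d ≥ 2 construction, where additionally there is a permutation π_q of {0,…,r−1} with c_{qd+k} = π_q(k) + qd(L+1) for all 0 ≤ k ≤ r−1. Then for every integer p with p ≥ (1/2)L² + (1/2)L + (d − r/2)(L−1) (as rational numbers), setting a_i = i·d mod p and b_i = −c_i mod p yields a valid girth-8 matrix M₈ over ℤ/pℤ, hence a (3,L) fully connected QC-LDPC code with girth at least 8. -/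
/-!
Every sum `i * d + c k` lies in `[0, p)`: the largest value of `c` is attained in the middle group and
is at most `q * d * (L + 1) + r - 1`, and `(L - 1) * d + q * d * (L + 1) + r` equals the assumed lower
bound on `p`. Hence a congruence mod `p` between two such sums is an equality in `ℕ`.

To solve `i * d + c i = j * d + c k` in `ℕ`, write `c i = s + d * e` with `s < d`. The level `e` is
`J * (L + 1)` if `i` lies in group `J` of the first half or in the middle group (`J = q`), and
`J * (L + 1) + n + 1` if `i = L - 1 - n` is the mirror image of an index `n` of group `J`. The
equation forces equal residues `s` and `i + e i = j + e k`, so `e k` lies in the window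
`[e i + i - (L - 1), e i + i]`. Levels of distinct groups are far enough apart that this window
forces `i` and `k` into the same group on the same side; there the residues are distinct, so
`k = i` and then `j = i` (`eq_of_sum_eq`).

Distinctness of the `a i` and of the `b i` is the special case in which `k = i` or `j = i`.
-/

/-- The index `i` has value `x`, in terms of the residues `s`: either `i` is one of the first `M`
indices (the first half together with the middle group), or it mirrors some `n < N`. -/
def HasForm (d L N M : ℕ) (s : ℕ → ℕ) (i x : ℕ) : Prop :=
  (i < M ∧ x = s i + d * (i / d * (L + 1))) ∨
    ∃ n < N, i = L - 1 - n ∧ x = s n + d * (n / d * (L + 1) + n + 1)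

theorem add_le_of_group_lt {J K : ℕ} (L : ℕ) (h : J < K) :
    J * (L + 1) + (L + 1) ≤ K * (L + 1) := by
  have := Nat.mul_le_mul_right (L + 1) (Nat.succ_le_of_lt h)
  rwa [Nat.succ_mul] at this

/-- The quotient and remainder on division by `d` can be read off from `m * d + (s + d * e)`. -/
theorem split_eq {d i j s t e f : ℕ} (hs : s < d) (ht : t < d)
    (h : i * d + (s + d * e) = j * d + (t + d * f)) : s = t ∧ i + e = j + f := by
  have hd : 0 < d := by omega
  have h' : s + d * (i + e) = t + d * (j + f) := by linarith
  constructor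
  · have := congrArg (· % d) h'
    simpa [Nat.add_mul_mod_self_left, Nat.mod_eq_of_lt hs, Nat.mod_eq_of_lt ht] using this
  · have := congrArg (· / d) h'
    simpa [Nat.add_mul_div_left _ _ hd, Nat.div_eq_of_lt hs, Nat.div_eq_of_lt ht] using this

/-- The condition on the diagonal entries, over the integers instead of `ZMod p`. -/
theorem eq_of_sum_eq {d L N M : ℕ} {s : ℕ → ℕ} (hNM : N ≤ M) (hL : N + M = L)
    (hs : ∀ n < M, s n < d)
    (hinj : ∀ m < M, ∀ n < M, m / d = n / d → s m = s n → m = n)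
    {i j k x y : ℕ} (hi : i < L) (hj : j < L)
    (hx : HasForm d L N M s i x) (hy : HasForm d L N M s k y)
    (h : i * d + x = j * d + y) : j = i ∧ k = i := by
  rcases hx with ⟨hiM, rfl⟩ | ⟨m, hm, him, rfl⟩ <;>
    rcases hy with ⟨hkM, rfl⟩ | ⟨n, hn, hkn, rfl⟩
  · obtain ⟨h1, h2⟩ := split_eq (hs _ hiM) (hs _ hkM) h
    rcases lt_trichotomy (i / d) (k / d) with hlt | heq | hlt
    · have := add_le_of_group_lt L hlt
      omega
    · have := hinj i hiM k hkM heq h1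
      subst this
      omega
    · have := add_le_of_group_lt L hlt
      omega
  · obtain ⟨h1, h2⟩ := split_eq (hs _ hiM) (hs n (by omega)) h
    rcases lt_trichotomy (i / d) (n / d) with hlt | heq | hlt
    · have := add_le_of_group_lt L hlt
      omega
    · have := hinj i hiM n (by omega) heq h1
      subst this
      omega
    · -- the window would force `i < n`, although `n` lies in an earlier group
      have := add_le_of_group_lt L hlt
      have hni : n < i := by
        by_contra hc
        exact absurd (Nat.div_le_div_right (c := d) (not_lt.mp hc)) (by omega)
      omega
  · obtain ⟨h1, h2⟩ := split_eq (hs m (by omega)) (hs k hkM) h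
    rcases lt_trichotomy (m / d) (k / d) with hlt | heq | hlt
    · have := add_le_of_group_lt L hlt
      omega
    · rw [heq] at h2
      omega
    · have := add_le_of_group_lt L hlt
      omega
  · obtain ⟨h1, h2⟩ := split_eq (hs m (by omega)) (hs n (by omega)) h
    rcases lt_trichotomy (m / d) (n / d) with hlt | heq | hlt
    · have := add_le_of_group_lt L hlt
      omega
    · have := hinj m (by omega) n (by omega) heq h1
      subst this
      omega
    · have := add_le_of_group_lt L hlt
      omega


/-- (Construction for `d ≥ 2`, case `1 ≤ r ≤ d`, `L = 2qd + r`.)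
With `c` as in the general `d ≥ 2` construction, and additionally a permutation `πq` of
`{0,…,r-1}` with `c (qd+k) = πq k + qd(L+1)` for `0 ≤ k ≤ r-1`, for every integer
`p ≥ (1/2)L² + (1/2)L + (d - r/2)(L-1)` (as rationals), setting `a i = i·d mod p` and
`b i = -c i mod p` yields a valid girth-8 matrix over `ZMod p`. -/
theorem stmt_8 (d q r L : ℕ) (hd : 2 ≤ d) (hq : 1 ≤ q) (hr1 : 1 ≤ r) (hr2 : r ≤ d)
    (hLdef : L = 2 * q * d + r)
    (c : Fin L → ℕ)
    (π₀ : Equiv.Perm (Fin d)) (hπ₀ : π₀ ⟨0, by omega⟩ = ⟨0, by omega⟩)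
    (hfirst : ∀ i : Fin L, ∀ h : i.val < d, c i = (π₀ ⟨i.val, h⟩ : Fin d).val)
    (π : ℕ → Equiv.Perm (Fin d))
    (hgroups : ∀ i : Fin L, ∀ j k : ℕ, 1 ≤ j → j ≤ q - 1 → ∀ hk : k < d,
      i.val = j * d + k → c i = ((π j) ⟨k, hk⟩ : Fin d).val + j * d * (L + 1))
    (hsym : ∀ i i' : Fin L, i.val < q * d → i'.val = L - 1 - i.val →
      c i' = c i + (i.val + 1) * d)
    (πq : Equiv.Perm (Fin r))
    (hqgroup : ∀ i : Fin L, ∀ k : ℕ, ∀ hk : k < r,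
      i.val = q * d + k → c i = (πq ⟨k, hk⟩ : Fin r).val + q * d * (L + 1))
    (p : ℕ)
    (hp : (L : ℚ) ^ 2 / 2 + (L : ℚ) / 2 + ((d : ℚ) - (r : ℚ) / 2) * ((L : ℚ) - 1) ≤ (p : ℚ)) :
    (∀ i j k : Fin L, (j, k) ≠ (i, i) →
        ((i.val * d : ℕ) : ZMod p) - (-(c i : ZMod p)) ≠
          ((j.val * d : ℕ) : ZMod p) - (-(c k : ZMod p))) ∧
      Function.Injective (fun i : Fin L => ((i.val * d : ℕ) : ZMod p)) ∧
      Function.Injective (fun j : Fin L => (-(c j : ZMod p) : ZMod p)) := by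
  have hd0 : 0 < d := by omega
  set N := q * d with hN
  have hL2 : L = 2 * N + r := by rw [hLdef, hN]; ring
  have hdN : d ≤ N := Nat.le_mul_of_pos_left d hq
  -- the groups of the first half, with `π₀` and the `π j` put into one family
  have hgrp : ∀ J, ∃ ρ : Equiv.Perm (Fin d), J < q → ∀ i : Fin L, ∀ k, ∀ hk : k < d,
      i.val = J * d + k → c i = (ρ ⟨k, hk⟩).val + J * d * (L + 1) := by
    intro J
    rcases Nat.eq_zero_or_pos J with rfl | hJ0
    · refine ⟨π₀, fun _ i k hk hik => ?_⟩
      have hik' : i.val = k := by omega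
      subst hik'
      simpa using hfirst i hk
    · exact ⟨π J, fun hJ i k hk hik => hgroups i J k hJ0 (by omega) hk hik⟩
  choose ρ hρ using hgrp
  let s : ℕ → ℕ := fun n => if h : n < L then c ⟨n, h⟩ - n / d * d * (L + 1) else 0
  have hdm : ∀ n, n / d * d + n % d = n := fun n => Nat.div_add_mod' n d
  have hlt : ∀ n, n % d < d := fun n => Nat.mod_lt n hd0
  have hdivlow : ∀ n, n < N → n / d < q := fun n hn => Nat.div_lt_of_lt_mul (by
    rw [mul_comm]; exact hn)
  have hdivmid : ∀ n, N ≤ n → n < N + r → n / d = q := fun n h1 h2 =>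
    Nat.div_eq_of_lt_le h1 (by rw [Nat.succ_mul]; omega)
  have hslow : ∀ n, n < N →
      s n = (ρ (n / d) ⟨n % d, hlt n⟩).val ∧
      ∀ h : n < L, c ⟨n, h⟩ = s n + n / d * d * (L + 1) := by
    intro n hn
    have hnL : n < L := by omega
    have := hρ (n / d) (hdivlow n hn) ⟨n, hnL⟩ (n % d) (hlt n) (hdm n).symm
    simp only [s, hnL, dif_pos]
    exact ⟨by omega, fun _ => by omega⟩
  have hsmid : ∀ n, N ≤ n → ∀ h2 : n < N + r,
      s n = (πq ⟨n - N, by omega⟩).val ∧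
      ∀ h : n < L, c ⟨n, h⟩ = s n + n / d * d * (L + 1) := by
    intro n h1 h2
    have hnL : n < L := by omega
    have := hqgroup ⟨n, hnL⟩ (n - N) (by omega) (by simp only; omega)
    simp only [s, hnL, dif_pos, hdivmid n h1 h2, ← hN]
    exact ⟨by omega, fun _ => by omega⟩
  have hsd : ∀ n < N + r, s n < d := by
    intro n hn
    rcases lt_or_ge n N with h | h
    · rw [(hslow n h).1]; exact (ρ _ _).isLt
    · rw [(hsmid n h hn).1]; exact lt_of_lt_of_le (πq _).isLt hr2
  have hinj : ∀ m < N + r, ∀ n < N + r, m / d = n / d → s m = s n → m = n := by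
    intro m hm n hn hmn hsmn
    rcases lt_or_ge m N with h | h <;> rcases lt_or_ge n N with h' | h'
    · rw [(hslow m h).1, (hslow n h').1, ← hmn] at hsmn
      have h3 := (ρ _).injective (Fin.ext hsmn)
      have h4 : m % d = n % d := congrArg Fin.val h3
      rw [← hdm m, ← hdm n, hmn, h4]
    · have := hdivlow m h
      have := hdivmid n h' hn
      omega
    · have := hdivlow n h'
      have := hdivmid m h hm
      omega
    · rw [(hsmid m h hm).1, (hsmid n h' hn).1] at hsmn
      have h4 : m - N = n - N := congrArg Fin.val (πq.injective (Fin.ext hsmn))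
      omega
  have hval : ∀ n < N + r, ∀ h : n < L, c ⟨n, h⟩ = s n + n / d * d * (L + 1) := by
    intro n hn h
    rcases lt_or_ge n N with h' | h'
    · exact (hslow n h').2 h
    · exact (hsmid n h' hn).2 h
  have hmir : ∀ i : Fin L, N + r ≤ i.val →
      c i = s (L - 1 - i) + (L - 1 - i) / d * d * (L + 1) + (L - 1 - i.val + 1) * d := by
    intro i hi
    have hiL := i.isLt
    have h1 : L - 1 - i.val < L := by omega
    have h2 : L - 1 - i.val < N + r := by omega
    rw [← hval _ h2 h1]
    exact hsym ⟨L - 1 - i.val, h1⟩ i (by simp only; omega) (by simp only; omega)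
  have hform : ∀ i : Fin L, HasForm d L N (N + r) s i (c i) := by
    intro i
    have hiL := i.isLt
    rcases lt_or_ge i.val (N + r) with h | h
    · exact Or.inl ⟨h, by rw [hval i h hiL]; ring⟩
    · exact Or.inr ⟨L - 1 - i, by omega, by omega, by rw [hmir i h]; ring⟩
  have hearly : ∀ n, n < N → n / d * d * (L + 1) + d * (L + 1) ≤ N * (L + 1) := by
    intro n hn
    have h1 : (n / d + 1) * d ≤ q * d := Nat.mul_le_mul_right d (hdivlow n hn)
    calc n / d * d * (L + 1) + d * (L + 1) = (n / d + 1) * d * (L + 1) := by ring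
      _ ≤ N * (L + 1) := Nat.mul_le_mul_right _ h1
  have hcmax : ∀ i : Fin L, c i < N * (L + 1) + r := by
    intro i
    have hiL := i.isLt
    rcases lt_or_ge i.val N with h | h
    · have h1 := hval i (by omega) hiL
      have h2 := hearly i h
      have h3 := hsd i (by omega)
      have h4 : d ≤ d * (L + 1) := Nat.le_mul_of_pos_right d (by omega)
      simp only [Fin.eta] at h1
      omega
    rcases lt_or_ge i.val (N + r) with h' | h'
    · have h1 := (hsmid i h h').2 hiL
      have h2 : s i < r := by rw [(hsmid i h h').1]; exact (πq _).isLt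
      rw [hdivmid i h h', ← hN] at h1
      simp only [Fin.eta] at h1
      omega
    · have h1 := hmir i h'
      have h2 := hearly (L - 1 - i) (by omega)
      have h3 := hsd (L - 1 - i) (by omega)
      have h4 : (L - 1 - i.val + 1) * d + d ≤ d * (L + 1) := by
        have : (L - 1 - i.val + 1 + 1) * d ≤ (L + 1) * d :=
          Nat.mul_le_mul_right d (by omega)
        linarith
      omega
  -- the assumed lower bound on `p` is exactly the largest sum plus one
  have hpbound : (L - 1) * d + N * (L + 1) + r ≤ p := by
    have hNQ : (N : ℚ) = ((L : ℚ) - r) / 2 := by rw [hL2]; push_cast; ring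
    have h1 : (((L - 1) * d + N * (L + 1) + r : ℕ) : ℚ) ≤ (p : ℚ) := by
      push_cast [Nat.cast_sub (show 1 ≤ L by omega)]
      rw [hNQ]
      linarith
    exact_mod_cast h1
  have hsum : ∀ j k : Fin L, j.val * d + c k < p := by
    intro j k
    have h1 := hcmax k
    have h2 : j.val * d ≤ (L - 1) * d := Nat.mul_le_mul_right d (by omega)
    omega
  have key : ∀ i j k : Fin L, (i.val * d : ZMod p) + c i = j.val * d + c k → j = i ∧ k = i := by
    intro i j k h
    have h1 : ((i.val * d + c i : ℕ) : ZMod p) = ((j.val * d + c k : ℕ) : ZMod p) := by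
      push_cast; exact h
    rw [ZMod.natCast_eq_natCast_iff] at h1
    have h2 := Nat.ModEq.eq_of_lt_of_lt h1 (hsum i i) (hsum j k)
    have h3 := eq_of_sum_eq (Nat.le_add_right N r) (by omega) hsd hinj i.isLt j.isLt
      (hform i) (hform k) h2
    exact ⟨Fin.ext h3.1, Fin.ext h3.2⟩
  refine ⟨fun i j k hne h => hne ?_, fun i j h => ?_, fun i j h => ?_⟩
  · obtain ⟨h1, h2⟩ := key i j k (by push_cast at h; linear_combination h)
    rw [h1, h2]
  · exact ((key i j i (by push_cast at h; linear_combination h)).1).symm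
  · exact ((key i i j (by linear_combination -h)).2).symm
end

section
/- (Case d+1 ≤ r ≤ 2d−1.) Let d ≥ 2, q ≥ 1, d+1 ≤ r ≤ 2d−1, L = 2qd + r, and let c₀,…,c_{L−1} be as in the general d ≥ 2 construction, where additionally there is a permutation π_q of {0,…,d−1} with π_q(r−d−1) = 1 and c_{qd+k} = π_q(k) + qd(L+1) for all 0 ≤ k ≤ d−1, and moreover c_{L−1−i} = c_i + (i+1)d also holds for all qd ≤ i ≤ qd + r − d − 1. Then for every integer p ≥ (1/2)L² + (1/2)L + ((2d−r)(L−1−d) + dL)/2 − r + 2, setting a_i = i·d mod p and b_i = −c_i mod p yields a valid girth-8 matrix M₈ over ℤ/pℤ, hence a (3,L) fully connected QC-LDPC code with girth at least 8. -/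
/-!
Write `M = L + 1`. Every index `x` has a base point `y` (either `x = y`, or `x` is the mirror image
`L - 1 - y`), and `c x = s + d * (g * M + t)`, where `g = y / d` is the group of `y`, the residue
`s < d` is injective on each group, and `t = 0` or `t = y + 1` according to the two cases.

The largest value of `c` is `q * d * M + (q * d + r - d) * d + 1`, attained at the mirror image of
`q * d + (r - d - 1)`; this is where `πq (r - d - 1) = 1` is used. The bound on `p` says exactly
that `p` exceeds this maximum plus `(L - 1) * d`, so every congruence `i * d + c i ≡ j * d + c k`
is an equality of integers. Reducing that equality modulo `d` makes the residues of `i` and `k`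
equal, and dividing by `d` then compares multiples of `M` with quantities of size at most `L`;
the four combinations of direct and mirrored `i`, `k` leave only `i = j = k`.
-/

/-- `IsRep d L σ x v` says that `v` has the shape of the coefficient at index `x`: for a base
point `y < L` with residue `σ y` and group `y / d`, either `x = y` and there is no correction, or
`x = L - 1 - y` and the correction is `(y + 1) * d`. -/
def IsRep (d L : ℕ) (σ : ℕ → ℕ) (x v : ℕ) : Prop :=
  ∃ y t : ℕ, y < L ∧ v = σ y + d * (y / d * (L + 1) + t) ∧
    ((t = 0 ∧ x = y) ∨ (t = y + 1 ∧ x + y + 1 = L))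

/-- The integer form of the girth condition. -/
lemma eq_of_isRep {d L : ℕ} {σ : ℕ → ℕ} (hσ : ∀ y, σ y < d)
    (hinj : ∀ y y', y / d = y' / d → σ y = σ y' → y = y')
    {i j k v w : ℕ} (hi : i < L) (hj : j < L) (hv : IsRep d L σ i v) (hw : IsRep d L σ k w)
    (h : i * d + v = j * d + w) : i = j ∧ i = k := by
  obtain ⟨y, t, hy, rfl, hyt⟩ := hv
  obtain ⟨y', t', hy', rfl, hyt'⟩ := hw
  have hs : σ y = σ y' := by
    have h1 := congrArg (· % d) h
    have e1 : i * d + (σ y + d * (y / d * (L + 1) + t))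
        = σ y + d * (i + (y / d * (L + 1) + t)) := by ring
    have e2 : j * d + (σ y' + d * (y' / d * (L + 1) + t'))
        = σ y' + d * (j + (y' / d * (L + 1) + t')) := by ring
    simpa only [e1, e2, Nat.add_mul_mod_self_left, Nat.mod_eq_of_lt (hσ _)] using h1
  have hq : i + (y / d * (L + 1) + t) = j + (y' / d * (L + 1) + t') := by
    have hd : 0 < d := lt_of_le_of_lt (Nat.zero_le _) (hσ 0)
    apply Nat.eq_of_mul_eq_mul_left hd
    rw [hs] at h
    linarith
  rcases lt_trichotomy (y / d) (y' / d) with hg | hg | hg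
  · have hlt : y < y' := by
      by_contra hc
      exact absurd (Nat.div_le_div_right (c := d) (not_lt.mp hc)) (not_le.mpr hg)
    have := Nat.mul_le_mul_right (L + 1) (Nat.succ_le_of_lt hg)
    rw [Nat.succ_mul] at this
    omega
  · obtain rfl := hinj y y' hg hs
    omega
  · have hlt : y' < y := by
      by_contra hc
      exact absurd (Nat.div_le_div_right (c := d) (not_lt.mp hc)) (not_le.mpr hg)
    have := Nat.mul_le_mul_right (L + 1) (Nat.succ_le_of_lt hg)
    rw [Nat.succ_mul] at this
    omega

/-- Sums `a + v` and `b + w` with `a, b ≤ A` and `v, w ≤ B` differ by at most `A + B < p`, so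
their congruence modulo `p` is an equality. -/
lemma add_eq_of_zmod {p a b v w A B : ℕ} (hp : A + B < p) (ha : a ≤ A) (hb : b ≤ A)
    (hv : v ≤ B) (hw : w ≤ B)
    (h : (a : ZMod p) + (v : ZMod p) = (b : ZMod p) + (w : ZMod p)) : a + v = b + w := by
  have h1 : (((a + v : ℕ) : ℤ) : ZMod p) = (((b + w : ℕ) : ℤ) : ZMod p) := by
    push_cast
    exact h
  rw [ZMod.intCast_eq_intCast_iff_dvd_sub] at h1
  have h2 := Int.eq_zero_of_abs_lt_dvd h1 (by rw [abs_lt]; omega)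
  omega


/-- (Construction for `d ≥ 2`, case `d+1 ≤ r ≤ 2d-1`, `L = 2qd + r`.)
With `c` as in the general `d ≥ 2` construction, a permutation `πq` of `{0,…,d-1}` with
`πq (r-d-1) = 1` and `c (qd+k) = πq k + qd(L+1)` for `0 ≤ k ≤ d-1`, and the symmetry rule
`c (L-1-i) = c i + (i+1)d` extended to `qd ≤ i ≤ qd+r-d-1`, for every integer
`p ≥ (1/2)L² + (1/2)L + ((2d-r)(L-1-d) + dL)/2 - r + 2`, setting `a i = i·d mod p` and
`b i = -c i mod p` yields a valid girth-8 matrix over `ZMod p`. -/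
theorem stmt_9 (d q r L : ℕ) (hd : 2 ≤ d) (hq : 1 ≤ q)
    (hr1 : d + 1 ≤ r) (hr2 : r ≤ 2 * d - 1)
    (hLdef : L = 2 * q * d + r)
    (c : Fin L → ℕ)
    (π₀ : Equiv.Perm (Fin d)) (hπ₀ : π₀ ⟨0, by omega⟩ = ⟨0, by omega⟩)
    (hfirst : ∀ i : Fin L, ∀ h : i.val < d, c i = (π₀ ⟨i.val, h⟩ : Fin d).val)
    (π : ℕ → Equiv.Perm (Fin d))
    (hgroups : ∀ i : Fin L, ∀ j k : ℕ, 1 ≤ j → j ≤ q - 1 → ∀ hk : k < d,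
      i.val = j * d + k → c i = ((π j) ⟨k, hk⟩ : Fin d).val + j * d * (L + 1))
    (hsym : ∀ i i' : Fin L, i.val < q * d → i'.val = L - 1 - i.val →
      c i' = c i + (i.val + 1) * d)
    (πq : Equiv.Perm (Fin d))
    (hπq : πq ⟨r - d - 1, by omega⟩ = ⟨1, by omega⟩)
    (hqgroup : ∀ i : Fin L, ∀ k : ℕ, ∀ hk : k < d,
      i.val = q * d + k → c i = (πq ⟨k, hk⟩ : Fin d).val + q * d * (L + 1))
    (hsym2 : ∀ i i' : Fin L, q * d ≤ i.val → i.val ≤ q * d + r - d - 1 →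
      i'.val = L - 1 - i.val → c i' = c i + (i.val + 1) * d)
    (p : ℕ)
    (hp : (L : ℚ) ^ 2 / 2 + (L : ℚ) / 2
        + ((2 * (d : ℚ) - (r : ℚ)) * ((L : ℚ) - 1 - (d : ℚ)) + (d : ℚ) * (L : ℚ)) / 2
        - (r : ℚ) + 2 ≤ (p : ℚ)) :
    (∀ i j k : Fin L, (j, k) ≠ (i, i) →
        ((i.val * d : ℕ) : ZMod p) - (-(c i : ZMod p)) ≠
          ((j.val * d : ℕ) : ZMod p) - (-(c k : ZMod p))) ∧
      Function.Injective (fun i : Fin L => ((i.val * d : ℕ) : ZMod p)) ∧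
      Function.Injective (fun j : Fin L => (-(c j : ZMod p) : ZMod p)) := by
  obtain ⟨σ, hσ, hinj, hσ1, hbase⟩ : ∃ σ : ℕ → ℕ, (∀ y, σ y < d) ∧
      (∀ y y', y / d = y' / d → σ y = σ y' → y = y') ∧ σ (q * d + (r - d - 1)) = 1 ∧
      ∀ x : Fin L, x.val < q * d + d →
        c x = σ x.val + d * (x.val / d * (L + 1)) := by
    have hd0 : 0 < d := by omega
    let ρ : ℕ → Equiv.Perm (Fin d) := fun g => if g = 0 then π₀ else if g = q then πq else π g
    refine ⟨fun y => (ρ (y / d) ⟨y % d, Nat.mod_lt _ hd0⟩).val, fun y => Fin.isLt _, ?_, ?_, ?_⟩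
    · intro y y' hg hs
      dsimp only at hs
      rw [hg] at hs
      have h1 := (ρ (y' / d)).injective (Fin.ext hs)
      have h2 : y % d = y' % d := by simpa using h1
      rw [← Nat.div_add_mod y d, ← Nat.div_add_mod y' d, hg, h2]
    · have h1 : (q * d + (r - d - 1)) / d = q := by
        rw [mul_comm, Nat.mul_add_div hd0, Nat.div_eq_of_lt (by omega), add_zero]
      have h2 : (q * d + (r - d - 1)) % d = r - d - 1 := by
        rw [mul_comm, Nat.mul_add_mod, Nat.mod_eq_of_lt (by omega)]
      simp only [h1, h2, ρ]
      rw [if_neg (by omega), if_pos trivial, hπq]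
    · intro x hx
      have hk := Nat.mod_lt x.val hd0
      have hx' : x.val = x.val / d * d + x.val % d := by
        rw [mul_comm]; exact (Nat.div_add_mod _ _).symm
      have hgq : x.val / d < q + 1 := by
        rw [Nat.div_lt_iff_lt_mul hd0]; linarith
      dsimp only [ρ]
      by_cases h0 : x.val / d = 0
      · have hlt : x.val < d := (Nat.div_eq_zero_iff_lt hd0).mp h0
        simp only [h0, if_true, Nat.mod_eq_of_lt hlt]
        rw [hfirst x hlt]
        ring
      · rw [if_neg h0]
        by_cases h1 : x.val / d = q
        · rw [if_pos h1, hqgroup x (x.val % d) hk (by rw [← h1]; exact hx'), h1]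
          ring
        · rw [if_neg h1, hgroups x (x.val / d) (x.val % d) (Nat.pos_of_ne_zero h0)
            (Nat.le_sub_one_of_lt (lt_of_le_of_ne (Nat.lt_succ_iff.mp hgq) h1)) hk hx']
          ring
  have hdd : d ≤ q * d := Nat.le_mul_of_pos_left d hq
  have hL2 : L = q * d + q * d + r := by rw [hLdef]; ring
  -- Every index is either a base point or the mirror image of one.
  have hcases : ∀ x : Fin L, x.val < q * d + d ∨ ∃ y : Fin L,
      y.val < q * d + (r - d) ∧ x.val + y.val + 1 = L ∧ c x = c y + (y.val + 1) * d := by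
    intro x
    by_cases hx : x.val < q * d + d
    · exact Or.inl hx
    · refine Or.inr ⟨⟨L - 1 - x.val, by omega⟩, ?_, ?_, ?_⟩
      · dsimp only; omega
      · dsimp only; omega
      · by_cases hy : L - 1 - x.val < q * d
        · exact hsym _ x hy (by dsimp only; omega)
        · exact hsym2 _ x (by dsimp only; omega) (by dsimp only; omega) (by dsimp only; omega)
  have hrep : ∀ x : Fin L, IsRep d L σ x.val (c x) := by
    intro x
    rcases hcases x with hx | ⟨y, hy, hxy, hcx⟩
    · exact ⟨x.val, 0, x.isLt, by rw [hbase x hx, add_zero], Or.inl ⟨rfl, rfl⟩⟩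
    · refine ⟨y.val, y.val + 1, y.isLt, ?_, Or.inr ⟨rfl, hxy⟩⟩
      rw [hcx, hbase y (by omega)]
      ring
  obtain ⟨e, rfl⟩ : ∃ e, r = d + 1 + e := ⟨r - d - 1, by omega⟩
  have hmax : ∀ x : Fin L, c x ≤ q * d * (L + 1) + (q * d + (e + 1)) * d + 1 := by
    have hb : ∀ x : Fin L, x.val < q * d + d → c x ≤ σ x.val + q * d * (L + 1) := by
      intro x hx
      have hgq : x.val / d ≤ q := by
        rw [← Nat.lt_succ_iff, Nat.div_lt_iff_lt_mul (by omega), Nat.succ_mul]; exact hx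
      rw [hbase x hx]
      have := Nat.mul_le_mul_left d (Nat.mul_le_mul_right (L + 1) hgq)
      linarith
    intro x
    rcases hcases x with hx | ⟨y, hy, hxy, hcx⟩
    · have h1 := hb x hx
      have h2 := hσ x.val
      have h3 : 1 * d ≤ (q * d + (e + 1)) * d := Nat.mul_le_mul_right d (by omega)
      omega
    · have h1 := hb y (by omega)
      have h2 := hσ y.val
      by_cases hye : y.val = q * d + e
      · have h3 : σ y.val = 1 := by
          rw [hye, ← hσ1]; congr 1; omega
        have h4 : (y.val + 1) * d = (q * d + (e + 1)) * d := by rw [hye]; ring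
        omega
      -- A residue up to `d - 1` is compensated by a mirror term smaller by at least `d`.
      · have h3 : (y.val + 1 + 1) * d ≤ (q * d + (e + 1)) * d :=
          Nat.mul_le_mul_right d (by omega)
        rw [Nat.succ_mul] at h3
        omega
  have hpb : (L - 1) * d + (q * d * (L + 1) + (q * d + (e + 1)) * d + 1) < p := by
    obtain ⟨l, hl⟩ : ∃ l, L = l + 1 := ⟨L - 1, by omega⟩
    have hlq : (l : ℚ) = 2 * q * d + d + e := by
      have : l = 2 * q * d + d + e := by omega
      rw [this]; push_cast; ring
    have hgoal : ((L - 1) * d + (q * d * (L + 1) + (q * d + (e + 1)) * d + 1) + 1 : ℕ)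
        ≤ (p : ℚ) := by
      refine le_trans (le_of_eq ?_) hp
      rw [hl, Nat.add_sub_cancel]
      push_cast
      rw [hlq]
      ring
    have := Nat.cast_le.mp hgoal
    omega
  have hid : ∀ i : Fin L, i.val * d ≤ (L - 1) * d := fun i =>
    Nat.mul_le_mul_right d (by have := i.isLt; omega)
  have key : ∀ i j k : Fin L, ((i.val * d : ℕ) : ZMod p) + (c i : ZMod p)
      = ((j.val * d : ℕ) : ZMod p) + (c k : ZMod p) → i = j ∧ i = k := by
    intro i j k h
    have h1 := add_eq_of_zmod hpb (hid i) (hid j) (hmax i) (hmax k) h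
    obtain ⟨h2, h3⟩ := eq_of_isRep hσ hinj i.isLt j.isLt (hrep i) (hrep k) h1
    exact ⟨Fin.ext h2, Fin.ext h3⟩
  refine ⟨?_, ?_, ?_⟩
  · intro i j k hne h
    simp only [sub_neg_eq_add] at h
    obtain ⟨rfl, rfl⟩ := key i j k h
    exact hne rfl
  -- The two injectivity claims are the cases `k = i` and `j = i` of `key`.
  · intro i j h
    exact (key i j i (congrArg (· + (c i : ZMod p)) h)).1
  · intro i k h
    exact (key i i k (congrArg (((i.val * d : ℕ) : ZMod p) + ·) (neg_injective h))).2
end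

section
/- Suppose the girth-8 matrix M₈ is valid, and let i₁,…,i_m ∈ {0,…,L−1} (m ≥ 2) be pairwise distinct indices such that a_{i₁},…,a_{i_m} is an arithmetic progression in ℤ/pℤ with common difference d. Then the m(m−1)/2 elements a_{i_s} − b_{i_t} with 1 ≤ s < t ≤ m are pairwise distinct in ℤ/pℤ: if a_{i_s} − b_{i_t} = a_{i_u} − b_{i_v} with 1 ≤ s < t ≤ m and 1 ≤ u < v ≤ m, then (s,t) = (u,v). -/
/-! An equality `a (idx s) - b (idx t) = a (idx u) - b (idx v)` with `s = u` forces `t = v` by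
injectivity of `b`. Otherwise, by symmetry, take `u < s`. The equality says
`b (idx t) - b (idx v) = (s - u) d`, so the diagonal entry `a (idx t) - b (idx t)` equals
`a (idx (t - (s - u))) - b (idx v)`; the index `t - (s - u)` is nonnegative because `s < t`. It
differs from `t`, so the diagonal entry is repeated elsewhere in the matrix, which validity
forbids. -/


/-- If the girth-8 matrix `M₈` is valid and `a (idx 0), …, a (idx (m-1))`
is an arithmetic progression (pairwise distinct indices, common difference `d`), then the
elements `a (idx s) - b (idx t)` with `s < t` are pairwise distinct. -/
theorem stmt_10 (L p : ℕ) (hL : 2 ≤ L) (hp : 2 ≤ p)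
    (a b : Fin L → ZMod p)
    (ha0 : a ⟨0, by omega⟩ = 0) (hb0 : b ⟨0, by omega⟩ = 0)
    (hvalid1 : ∀ i j k : Fin L, (j, k) ≠ (i, i) → a i - b i ≠ a j - b k)
    (hvalid2 : Function.Injective a)
    (hvalid3 : Function.Injective b)
    (m : ℕ) (hm : 2 ≤ m)
    (idx : Fin m → Fin L) (hidx : Function.Injective idx)
    (d : ZMod p)
    (hAP : ∀ s : ℕ, (hs : s + 1 < m) →
      a (idx ⟨s + 1, hs⟩) - a (idx ⟨s, by omega⟩) = d) :
    ∀ s t u v : Fin m, s < t → u < v →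
      a (idx s) - b (idx t) = a (idx u) - b (idx v) → s = u ∧ t = v := by
  have hlin : ∀ n : ℕ, ∀ hn : n < m,
      a (idx ⟨n, hn⟩) = a (idx ⟨0, by omega⟩) + n * d := by
    intro n
    induction n with
    | zero => intro hn; simp
    | succ k ih =>
      intro hn
      have h1 := hAP k hn
      have h2 := ih (by omega)
      push_cast
      linear_combination h1 + h2
  have key : ∀ s t u v : Fin m, u < s → s < t →
      a (idx s) - b (idx t) ≠ a (idx u) - b (idx v) := by
    rintro ⟨s, hs⟩ ⟨t, ht⟩ ⟨u, hu⟩ v hus hst h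
    simp only [Fin.mk_lt_mk] at hus hst
    obtain ⟨k, rfl⟩ := Nat.exists_eq_add_of_lt hst
    -- With `t = s + k + 1`, the index `t - (s - u)` is `u + k + 1`.
    have hw : u + k + 1 < m := by omega
    refine hvalid1 (idx ⟨s + k + 1, ht⟩) (idx ⟨u + k + 1, hw⟩) (idx v) ?_ ?_
    · intro hEq
      have := hidx (Prod.mk.inj hEq).1
      simp only [Fin.mk.injEq] at this
      omega
    · have e1 := hlin _ ht
      have e2 := hlin _ hw
      have e3 := hlin _ hs
      have e4 := hlin _ hu
      push_cast at e1 e2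
      linear_combination h + e1 - e2 - e3 + e4
  intro s t u v hst huv h
  rcases lt_trichotomy s u with hsu | rfl | hus
  · exact absurd h.symm (key u v s t hsu huv)
  · exact ⟨rfl, hidx (hvalid3 (sub_right_injective h))⟩
  · exact absurd h (key s t u v hus hst)
end

section
/- Suppose the girth-8 matrix M₈ is valid, and let i₁,…,i_m ∈ {0,…,L−1} (m ≥ 2) be pairwise distinct indices such that a_{i₁},…,a_{i_m} is an arithmetic progression in ℤ/pℤ with common difference d. Then for all 1 ≤ u < v ≤ m and every index w ∈ {0,…,L−1} with w ∉ {i₁,…,i_m}, one has a_{i_u} − b_{i_v} ≠ a_{i₁} − b_w in ℤ/pℤ. -/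
/-!
Write `A s = a (idx s)`, so that `A s = A 0 + s * d`. Translating the row index of the progression
by `v - u` turns an equality `A u - b (idx v) = A 0 - b w` into
`A v - b (idx v) = A (v - u) - b w`. The left side is a diagonal entry of the matrix and, since
`w ≠ idx v`, the right side is a different position, which contradicts validity.
-/

/-- If the girth-8 matrix `M₈` is valid and `a (idx 0), …, a (idx (m-1))`
is an arithmetic progression (pairwise distinct indices, common difference `d`), then for
all `u < v` and every index `w` outside the range of `idx`,
`a (idx u) - b (idx v) ≠ a (idx 0) - b w`. -/
theorem stmt_11 (L p : ℕ) (hL : 2 ≤ L) (hp : 2 ≤ p)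
    (a b : Fin L → ZMod p)
    (ha0 : a ⟨0, by omega⟩ = 0) (hb0 : b ⟨0, by omega⟩ = 0)
    (hvalid1 : ∀ i j k : Fin L, (j, k) ≠ (i, i) → a i - b i ≠ a j - b k)
    (hvalid2 : Function.Injective a)
    (hvalid3 : Function.Injective b)
    (m : ℕ) (hm : 2 ≤ m)
    (idx : Fin m → Fin L) (hidx : Function.Injective idx)
    (d : ZMod p)
    (hAP : ∀ s : ℕ, (hs : s + 1 < m) →
      a (idx ⟨s + 1, hs⟩) - a (idx ⟨s, by omega⟩) = d) :
    ∀ u v : Fin m, u < v → ∀ w : Fin L, (∀ s : Fin m, idx s ≠ w) →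
      a (idx u) - b (idx v) ≠ a (idx ⟨0, by omega⟩) - b w := by
  have key : ∀ s : ℕ, (hs : s < m) →
      a (idx ⟨s, hs⟩) = a (idx ⟨0, by omega⟩) + (s : ZMod p) * d := by
    intro s
    induction s with
    | zero => intro hs; simp
    | succ s ih =>
      intro hs
      have h1 := hAP s hs
      have h2 := ih (by omega)
      push_cast
      linear_combination h1 + h2
  intro u v huv w hw h
  have hlt : (u : ℕ) < v := huv
  -- The shifted entry in row `v - u` and column `w` repeats the diagonal entry of row `v`.
  refine hvalid1 (idx v) (idx ⟨v - u, by omega⟩) w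
    (fun e => hw v (congrArg Prod.snd e).symm) ?_
  have hu := key u u.2
  have hv := key v v.2
  have hvu := key (v - u) (by omega)
  rw [Nat.cast_sub hlt.le] at hvu
  simp only [Fin.eta] at hu hv
  linear_combination h + hv - hvu - hu
end

section
/- Suppose the girth-8 matrix M₈ is valid, and fix d ∈ ℤ/pℤ with d ≠ 0. Let i^g₁,…,i^g_{j_g} and i^h₁,…,i^h_{j_h} be two sequences of indices in {0,…,L−1}, each consisting of distinct indices, with disjoint index sets, such that a_{i^g_{s+1}} − a_{i^g_s} = d for 1 ≤ s ≤ j_g−1 and a_{i^h_{u+1}} − a_{i^h_u} = d for 1 ≤ u ≤ j_h−1. Then for all 1 ≤ s < t ≤ j_g and 1 ≤ u < v ≤ j_h, one has a_{i^g_s} − b_{i^g_t} ≠ a_{i^h_u} − b_{i^h_v} in ℤ/pℤ. -/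
/-! Suppose `a (idxg s) - b (idxg t) = a (idxh u) - b (idxh v)`, and say `t - s ≤ v - u`.
Adding `(t - s) • d` to both sides moves `s` up to `t` in the first progression and `u` up to
`u + (t - s) ≤ v` in the second, which stays in range. The left side becomes the diagonal entry
at `idxg t`, while the right side is an entry in column `idxh v ≠ idxg t`, contradicting the
uniqueness of diagonal entries. The case `v - u ≤ t - s` is symmetric. -/

theorem ap_shift {L p n : ℕ} (a : Fin L → ZMod p) (d : ZMod p) (idx : Fin n → Fin L)
    (hAP : ∀ s : ℕ, (hs : s + 1 < n) →
      a (idx ⟨s + 1, hs⟩) - a (idx ⟨s, by omega⟩) = d)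
    (s m : ℕ) (h : s + m < n) :
    a (idx ⟨s + m, h⟩) = a (idx ⟨s, by omega⟩) + m * d := by
  induction m with
  | zero => simp
  | succ k ih =>
    have h1 := ih (by omega)
    have h2 := hAP (s + k) (by omega)
    have h3 : a (idx ⟨s + (k + 1), h⟩) = a (idx ⟨s + k, by omega⟩) + d :=
      sub_eq_iff_eq_add'.mp h2
    rw [h3, h1]
    push_cast
    ring

/-- The case in which the gap `t - s` in the first progression is at most the gap `v - u` in
the second. -/
theorem ne_of_gap_le {L p : ℕ} (a b : Fin L → ZMod p)
    (hvalid1 : ∀ i j k : Fin L, (j, k) ≠ (i, i) → a i - b i ≠ a j - b k)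
    (d : ZMod p) (jg jh : ℕ) (idxg : Fin jg → Fin L) (idxh : Fin jh → Fin L)
    (hdisj : ∀ (s : Fin jg) (t : Fin jh), idxg s ≠ idxh t)
    (hAPg : ∀ s : ℕ, (hs : s + 1 < jg) →
      a (idxg ⟨s + 1, hs⟩) - a (idxg ⟨s, by omega⟩) = d)
    (hAPh : ∀ u : ℕ, (hu : u + 1 < jh) →
      a (idxh ⟨u + 1, hu⟩) - a (idxh ⟨u, by omega⟩) = d)
    (s m u n : ℕ) (hmn : m ≤ n) (ht : s + m < jg) (hv : u + n < jh) :
    a (idxg ⟨s, by omega⟩) - b (idxg ⟨s + m, ht⟩) ≠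
      a (idxh ⟨u, by omega⟩) - b (idxh ⟨u + n, hv⟩) := by
  intro heq
  have h1 := ap_shift a d idxg hAPg s m ht
  have h2 := ap_shift a d idxh hAPh u m (by omega)
  refine hvalid1 (idxg ⟨s + m, ht⟩) (idxh ⟨u + m, by omega⟩) (idxh ⟨u + n, hv⟩) ?_ ?_
  · intro h
    exact hdisj _ _ (Prod.ext_iff.mp h).2.symm
  · rw [h1, h2]
    linear_combination heq

/-- If the girth-8 matrix `M₈` is valid, `d ≠ 0`, and `idxg`, `idxh` are
two arithmetic subsequences of `a` with common difference `d`, each with distinct indices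
and with disjoint index sets, then for all `s < t` and `u < v`,
`a (idxg s) - b (idxg t) ≠ a (idxh u) - b (idxh v)`. -/
theorem stmt_12 (L p : ℕ) (hL : 2 ≤ L) (hp : 2 ≤ p)
    (a b : Fin L → ZMod p)
    (ha0 : a ⟨0, by omega⟩ = 0) (hb0 : b ⟨0, by omega⟩ = 0)
    (hvalid1 : ∀ i j k : Fin L, (j, k) ≠ (i, i) → a i - b i ≠ a j - b k)
    (hvalid2 : Function.Injective a)
    (hvalid3 : Function.Injective b)
    (d : ZMod p) (hd : d ≠ 0)
    (jg jh : ℕ)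
    (idxg : Fin jg → Fin L) (hg : Function.Injective idxg)
    (idxh : Fin jh → Fin L) (hh : Function.Injective idxh)
    (hdisj : ∀ (s : Fin jg) (t : Fin jh), idxg s ≠ idxh t)
    (hAPg : ∀ s : ℕ, (hs : s + 1 < jg) →
      a (idxg ⟨s + 1, hs⟩) - a (idxg ⟨s, by omega⟩) = d)
    (hAPh : ∀ u : ℕ, (hu : u + 1 < jh) →
      a (idxh ⟨u + 1, hu⟩) - a (idxh ⟨u, by omega⟩) = d) :
    ∀ (s t : Fin jg) (u v : Fin jh), s < t → u < v →
      a (idxg s) - b (idxg t) ≠ a (idxh u) - b (idxh v) := by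
  rintro ⟨s, hs⟩ ⟨t, ht⟩ ⟨u, hu⟩ ⟨v, hv⟩ hst huv
  obtain ⟨m, rfl⟩ := Nat.exists_eq_add_of_le (Fin.mk_lt_mk.mp hst).le
  obtain ⟨n, rfl⟩ := Nat.exists_eq_add_of_le (Fin.mk_lt_mk.mp huv).le
  rcases le_total m n with h | h
  · exact ne_of_gap_le a b hvalid1 d jg jh idxg idxh hdisj hAPg hAPh s m u n h ht hv
  · exact (ne_of_gap_le a b hvalid1 d jh jg idxh idxg (fun x y => (hdisj y x).symm)
      hAPh hAPg u n s m h hv ht).symm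
end

section
/- Suppose the girth-8 matrix M₈ is valid, and fix d ∈ ℤ/pℤ with d ≠ 0. Let i¹₁,…,i¹_{j₁} and i^k₁,…,i^k_{j_k} be two sequences of indices in {0,…,L−1}, each consisting of distinct indices, with disjoint index sets (or identical sequences), such that a_{i¹_{s+1}} − a_{i¹_s} = d for 1 ≤ s ≤ j₁−1, a_{i^k_{u+1}} − a_{i^k_u} = d for 1 ≤ u ≤ j_k−1, and j₁ ≥ j_k. Then for all 1 ≤ s < t ≤ j_k and every index l ∈ {0,…,L−1} with l ∉ {i¹₁,…,i¹_{j₁}}, one has a_{i¹₁} − b_l ≠ a_{i^k_s} − b_{i^k_t} in ℤ/pℤ. -/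
/-! Shifting a hypothetical collision `a (idx1 0) - b l = a (idxk s) - b (idxk t)` by `(t - s) • d`
moves both first indices along their progressions (`arith_prog`), giving
`a (idx1 (t - s)) - b l = a (idxk t) - b (idxk t)`; the index `t - s` is in range as
`t - s < jk ≤ j1`. The right-hand side is a diagonal entry, so validity forces
`idx1 (t - s) = idxk t = l`, contradicting that `l` is outside the range of `idx1`. -/

theorem arith_prog {R : Type*} [CommRing R] {m : ℕ} (f : Fin m → R) (d : R)
    (hf : ∀ s : ℕ, (hs : s + 1 < m) → f ⟨s + 1, hs⟩ - f ⟨s, by omega⟩ = d) (n s : ℕ)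
    (h : s + n < m) : f ⟨s + n, h⟩ = f ⟨s, by omega⟩ + n * d := by
  induction n with
  | zero => simp
  | succ n ih =>
    have h2 : f ⟨s + (n + 1), h⟩ - f ⟨s + n, by omega⟩ = d := hf (s + n) h
    rw [ih (by omega)] at h2
    push_cast
    linear_combination h2


/-- If the girth-8 matrix `M₈` is valid, `d ≠ 0`, and `idx1`, `idxk` are
two arithmetic subsequences of `a` with common difference `d` (each with distinct indices,
having disjoint index sets or being identical), with `j1 ≥ jk`, then for all `s < t` and
every index `l` outside the range of `idx1`, `a (idx1 0) - b l ≠ a (idxk s) - b (idxk t)`. -/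
theorem stmt_13 (L p : ℕ) (hL : 2 ≤ L) (hp : 2 ≤ p)
    (a b : Fin L → ZMod p)
    (ha0 : a ⟨0, by omega⟩ = 0) (hb0 : b ⟨0, by omega⟩ = 0)
    (hvalid1 : ∀ i j k : Fin L, (j, k) ≠ (i, i) → a i - b i ≠ a j - b k)
    (hvalid2 : Function.Injective a)
    (hvalid3 : Function.Injective b)
    (d : ZMod p) (hd : d ≠ 0)
    (j1 jk : ℕ) (hj1 : 1 ≤ j1) (hjk : 1 ≤ jk) (hj1k : jk ≤ j1)
    (idx1 : Fin j1 → Fin L) (h1 : Function.Injective idx1)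
    (idxk : Fin jk → Fin L) (hk : Function.Injective idxk)
    (hdisj : (∀ (s : Fin j1) (t : Fin jk), idx1 s ≠ idxk t) ∨
      (∃ h : jk = j1, ∀ t : Fin jk, idxk t = idx1 (Fin.cast h t)))
    (hAP1 : ∀ s : ℕ, (hs : s + 1 < j1) →
      a (idx1 ⟨s + 1, hs⟩) - a (idx1 ⟨s, by omega⟩) = d)
    (hAPk : ∀ u : ℕ, (hu : u + 1 < jk) →
      a (idxk ⟨u + 1, hu⟩) - a (idxk ⟨u, by omega⟩) = d) :
    ∀ s t : Fin jk, s < t → ∀ l : Fin L, (∀ u : Fin j1, idx1 u ≠ l) →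
      a (idx1 ⟨0, by omega⟩) - b l ≠ a (idxk s) - b (idxk t) := by
  intro s t hst l hl heq
  have hst' : s.val < t.val := hst
  have ht := t.isLt
  have e1 := arith_prog (fun n => a (idx1 n)) d hAP1 (t.val - s.val) 0 (by omega)
  have ek := arith_prog (fun n => a (idxk n)) d hAPk (t.val - s.val) s.val (by omega)
  have hidx : (⟨s.val + (t.val - s.val), by omega⟩ : Fin jk) = t :=
    Fin.ext (by simp only; omega)
  rw [hidx] at ek
  -- Both sides of the collision move by `(t - s) • d`, landing on a diagonal entry on the right.
  refine hvalid1 (idxk t) (idx1 ⟨0 + (t.val - s.val), by omega⟩) l ?_ ?_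
  · intro h
    rw [Prod.mk.injEq] at h
    exact hl _ (h.1.trans h.2.symm)
  · simp only [Fin.eta] at e1 ek
    rw [e1, ek]
    linear_combination -heq
end

section
/- Let p be a positive integer, let S be a finite set of integers with S ⊆ {0,1,…,p−1} and |S| = L, and let x be an integer with 0 ≤ x ≤ p−1. Then the number of ordered pairs (u,v) ∈ S×S with 1 ≤ v − u ≤ p − x − 1 is at least L(L−1)/2 − x(x+1)/2. -/
/-!
There are `L(L-1)/2` pairs `u < v` in `S`, since swapping coordinates matches them with the pairs
`u > v` in the off-diagonal. Such a pair fails to be counted only if `v - u ≥ p - x`. Writing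
`u = i` and `v = p - 1 - j` with `i, j ≥ 0`, this says `i + j < x`, so there are at most
`1 + 2 + ⋯ + x = x(x+1)/2` failures.
-/

theorem two_mul_card_lt_pairs (S : Finset ℤ) :
    2 * ((S ×ˢ S).filter (fun uv : ℤ × ℤ => uv.1 < uv.2)).card + S.card = S.card * S.card := by
  have hswap : ((S ×ˢ S).filter (fun uv : ℤ × ℤ => uv.2 < uv.1)).card =
      ((S ×ˢ S).filter (fun uv : ℤ × ℤ => uv.1 < uv.2)).card := by
    apply Finset.card_bij' (fun a _ => a.swap) (fun a _ => a.swap) <;> simp +contextual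
  have hoff : S.offDiag = (S ×ˢ S).filter (fun uv : ℤ × ℤ => uv.1 < uv.2) ∪
      (S ×ˢ S).filter (fun uv : ℤ × ℤ => uv.2 < uv.1) := by
    ext ⟨u, v⟩
    simp only [Finset.mem_offDiag, Finset.mem_union, Finset.mem_filter, Finset.mem_product]
    grind
  have hdisj : Disjoint ((S ×ˢ S).filter (fun uv : ℤ × ℤ => uv.1 < uv.2))
      ((S ×ˢ S).filter (fun uv : ℤ × ℤ => uv.2 < uv.1)) := by
    apply Finset.disjoint_filter.2
    intro a _ h
    exact h.asymm
  have h := congrArg Finset.card hoff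
  rw [Finset.card_union_of_disjoint hdisj, hswap, Finset.offDiag_card] at h
  have := Nat.le_mul_self S.card
  omega

theorem two_mul_card_far_pairs_le (p : ℕ) (S : Finset ℤ)
    (hS : S ⊆ Finset.Icc 0 ((p : ℤ) - 1)) (x : ℕ) :
    2 * ((S ×ˢ S).filter (fun uv : ℤ × ℤ => (p : ℤ) - x ≤ uv.2 - uv.1)).card ≤ x * (x + 1) := by
  have hle : ((S ×ˢ S).filter (fun uv : ℤ × ℤ => (p : ℤ) - x ≤ uv.2 - uv.1)).card ≤
      ((Finset.range x).sigma (fun n => Finset.HasAntidiagonal.antidiagonal n)).card := by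
    -- `(u, v) ↦ (i, j) = (u, p - 1 - v)`, graded by the value `i + j < x`.
    apply Finset.card_le_card_of_injOn
      (fun uv => ⟨uv.1.toNat + ((p : ℤ) - 1 - uv.2).toNat,
        (uv.1.toNat, ((p : ℤ) - 1 - uv.2).toNat)⟩)
    · rintro ⟨u, v⟩ h
      simp only [Finset.coe_filter, Finset.mem_product, Set.mem_ofPred_eq] at h
      have hu := Finset.mem_Icc.1 (hS h.1.1)
      have hv := Finset.mem_Icc.1 (hS h.1.2)
      simp only [Finset.mem_coe, Finset.mem_sigma, Finset.mem_range, Finset.HasAntidiagonal.mem_antidiagonal,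
        and_true]
      omega
    · rintro ⟨u, v⟩ h ⟨u', v'⟩ h' heq
      simp only [Finset.coe_filter, Finset.mem_product, Set.mem_ofPred_eq] at h h'
      have hu := Finset.mem_Icc.1 (hS h.1.1)
      have hv := Finset.mem_Icc.1 (hS h.1.2)
      have hu' := Finset.mem_Icc.1 (hS h'.1.1)
      have hv' := Finset.mem_Icc.1 (hS h'.1.2)
      have h2 := congrArg (fun s : (_ : ℕ) × (ℕ × ℕ) => s.2) heq
      simp only [Prod.mk.injEq] at h2 ⊢
      omega
  have hsum : ∀ n : ℕ, 2 * ∑ k ∈ Finset.range n, (k + 1) = n * (n + 1) := by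
    intro n
    induction n with
    | zero => simp
    | succ n ih => rw [Finset.sum_range_succ, mul_add, ih]; ring
  simp only [Finset.card_sigma, Finset.Nat.card_antidiagonal] at hle
  rw [← hsum x]
  omega

/-- Let `p` be a positive integer, `S ⊆ {0,1,…,p-1}` with `|S| = L`, and
`0 ≤ x ≤ p-1`. Then the number of ordered pairs `(u,v) ∈ S × S` with
`1 ≤ v - u ≤ p - x - 1` is at least `L(L-1)/2 - x(x+1)/2`. -/
theorem stmt_15 (p : ℕ) (hp : 0 < p) (S : Finset ℤ)
    (hS : S ⊆ Finset.Icc 0 ((p : ℤ) - 1))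
    (L : ℕ) (hcard : S.card = L)
    (x : ℕ) (hx : x ≤ p - 1) :
    (L : ℚ) * ((L : ℚ) - 1) / 2 - (x : ℚ) * ((x : ℚ) + 1) / 2 ≤
      (((S ×ˢ S).filter
        (fun uv : ℤ × ℤ => 1 ≤ uv.2 - uv.1 ∧ uv.2 - uv.1 ≤ (p : ℤ) - x - 1)).card : ℚ) := by
  have hcover : (S ×ˢ S).filter (fun uv : ℤ × ℤ => uv.1 < uv.2) ⊆
      (S ×ˢ S).filter
        (fun uv : ℤ × ℤ => 1 ≤ uv.2 - uv.1 ∧ uv.2 - uv.1 ≤ (p : ℤ) - x - 1) ∪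
      (S ×ˢ S).filter (fun uv : ℤ × ℤ => (p : ℤ) - x ≤ uv.2 - uv.1) := by
    rintro ⟨u, v⟩ h
    simp only [Finset.mem_union, Finset.mem_filter, Finset.mem_product] at h ⊢
    by_cases hc : (p : ℤ) - x ≤ v - u
    · exact Or.inr ⟨h.1, hc⟩
    · exact Or.inl ⟨h.1, by omega, by omega⟩
  have h1 := (Finset.card_le_card hcover).trans (Finset.card_union_le _ _)
  have h2 := two_mul_card_lt_pairs S
  have h3 := two_mul_card_far_pairs_le p S hS x
  rw [hcard] at h2
  -- Explicit casts: `qify` would also rewrite the filter predicates inside the cardinalities.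
  have q1 := (Nat.cast_le (α := ℚ)).2 h1
  have q2 := congrArg (Nat.cast : ℕ → ℚ) h2
  have q3 := (Nat.cast_le (α := ℚ)).2 h3
  rw [Nat.cast_add] at q1
  rw [Nat.cast_add, Nat.cast_mul, Nat.cast_mul, Nat.cast_two] at q2
  rw [Nat.cast_mul, Nat.cast_mul, Nat.cast_add, Nat.cast_one, Nat.cast_two] at q3
  linarith
end

section
/- Suppose the girth-8 matrix M₈ is valid. Then for every integer x with 1 ≤ x ≤ p−2, the inequality 2(p − x − 1)(p − 2L + 2) ≥ L(L−1) − x(x+1) holds. -/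
/-!
For `i ≠ j` put `δ = a i - a j`, and let `m` be the number of ordered pairs `(k, l)` with
`a k - a l = δ`. Validity prevents `b k - δ` from being a value of `b` for any such pair, since
otherwise `a k - b k` would occur elsewhere in the matrix, in row `l`. Hence row `i` has `m`
entries, one in each column `k` of a pair `(k, l)`, that are missing from row `j`; one of them,
`a i - b i`, is diagonal. Together with the `L` diagonal entries and the `L - 1` off-diagonal
entries of row `j` this gives `p ≥ 2 * L + m - 2` (`card_pairs_add_le`).

The `L * (L - 1)` ordered pairs of distinct indices are distributed over at most `p - 1` nonzero
differences, so `L * (L - 1) ≤ (p - 2 * L + 2) * (p - 1)` by pigeonhole. If `p - 1 ≤ 2 * (p - x - 1)`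
the inequality follows. Otherwise `p ≤ 2 * x`, and `2 * L - 1 ≤ p` forces `L ≤ x`, so the side
`L * (L - 1) - x * (x + 1)` is negative while the other one is nonnegative.
-/

/-- The bound `2 * L + m - 2 ≤ p`, where `m` counts the pairs with the same `a`-difference as
`(i, j)`. -/
lemma card_pairs_add_le {L p : ℕ} [NeZero p] (a b : Fin L → ZMod p)
    (hvalid1 : ∀ i j k : Fin L, (j, k) ≠ (i, i) → a i - b i ≠ a j - b k)
    (ha : Function.Injective a) (hb : Function.Injective b) {i j : Fin L} (hij : i ≠ j) :
    2 * L + (Finset.univ.filter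
      (fun q : Fin L × Fin L => a q.1 - a q.2 = a i - a j)).card ≤ p + 2 := by
  classical
  set S := Finset.univ.filter (fun q : Fin L × Fin L => a q.1 - a q.2 = a i - a j) with hS
  let D := Finset.univ.image (fun k => a k - b k)
  let R := (Finset.univ.erase j).image (fun k => a j - b k)
  let T := (S.erase (i, j)).image (fun q => a i - b q.1)
  have hD : D.card = L := by
    rw [Finset.card_image_of_injective, Finset.card_univ, Fintype.card_fin]
    intro k l h
    by_contra hkl
    exact hvalid1 k l l (by simpa using fun h' => hkl h'.symm) h
  have hR : R.card = L - 1 := by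
    rw [Finset.card_image_of_injective, Finset.card_erase_of_mem (Finset.mem_univ _),
      Finset.card_univ, Fintype.card_fin]
    intro k l h
    exact hb (sub_right_injective h)
  have hmem : ∀ q ∈ S, a q.1 - a q.2 = a i - a j := by
    intro q hq
    simpa [hS] using hq
  have hT : T.card = S.card - 1 := by
    rw [Finset.card_image_of_injOn, Finset.card_erase_of_mem (by simp [hS])]
    intro q hq r hr h
    have hq := hmem q (Finset.mem_of_mem_erase hq)
    have hr := hmem r (Finset.mem_of_mem_erase hr)
    have h1 : q.1 = r.1 := hb (sub_right_injective h)
    rw [h1, ← hr] at hq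
    exact Prod.ext h1 (ha (sub_right_injective hq))
  have hSpos : 0 < S.card := Finset.card_pos.mpr ⟨(i, j), by simp [hS]⟩
  have hDR : Disjoint D R := by
    rw [Finset.disjoint_left]
    intro v hv hv'
    obtain ⟨k, -, rfl⟩ := Finset.mem_image.mp hv
    obtain ⟨l, hl, h⟩ := Finset.mem_image.mp hv'
    have hl := Finset.ne_of_mem_erase hl
    exact hvalid1 k j l (by simp only [ne_eq, Prod.mk.injEq]; rintro ⟨rfl, rfl⟩; exact hl rfl) h.symm
  have hDT : Disjoint (D ∪ R) T := by
    rw [Finset.disjoint_right]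
    intro v hv hv'
    obtain ⟨q, hq, rfl⟩ := Finset.mem_image.mp hv
    have hne := Finset.ne_of_mem_erase hq
    have hq := hmem q (Finset.mem_of_mem_erase hq)
    rcases Finset.mem_union.mp hv' with h | h
    · obtain ⟨k, -, h⟩ := Finset.mem_image.mp h
      refine hvalid1 k i q.1 ?_ h
      simp only [ne_eq, Prod.mk.injEq]
      rintro ⟨h1, h2⟩
      -- the column `q.1 = i` would force `q = (i, j)`
      rw [h2, ← h1] at hq
      exact hne (Prod.ext (h2.trans h1.symm) (ha (sub_right_injective hq)))
    · obtain ⟨r, -, h⟩ := Finset.mem_image.mp h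
      refine hvalid1 q.1 q.2 r ?_ (by linear_combination hq - h)
      simp only [ne_eq, Prod.mk.injEq]
      rintro ⟨h1, -⟩
      rw [h1, sub_self] at hq
      exact hij (ha (sub_eq_zero.mp hq.symm))
  have hle := Finset.card_le_univ ((D ∪ R) ∪ T)
  rw [Finset.card_union_of_disjoint hDT, Finset.card_union_of_disjoint hDR, hD, hR, hT,
    ZMod.card] at hle
  omega

/-- If the girth-8 matrix `M₈` is valid, then for every integer `x` with
`1 ≤ x ≤ p-2`, the inequality `2(p-x-1)(p-2L+2) ≥ L(L-1) - x(x+1)` holds (over `ℤ`). -/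
theorem stmt_16 (L p : ℕ) (hL : 2 ≤ L) (hp : 2 ≤ p)
    (a b : Fin L → ZMod p)
    (ha0 : a ⟨0, by omega⟩ = 0) (hb0 : b ⟨0, by omega⟩ = 0)
    (hvalid1 : ∀ i j k : Fin L, (j, k) ≠ (i, i) → a i - b i ≠ a j - b k)
    (hvalid2 : Function.Injective a)
    (hvalid3 : Function.Injective b) :
    ∀ x : ℕ, 1 ≤ x → x ≤ p - 2 →
      (L : ℤ) * ((L : ℤ) - 1) - (x : ℤ) * ((x : ℤ) + 1) ≤
        2 * ((p : ℤ) - x - 1) * ((p : ℤ) - 2 * L + 2) := by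
  classical
  intro x hx1 hx2
  haveI : NeZero p := ⟨by omega⟩
  have key := fun i j => card_pairs_add_le a b hvalid1 hvalid2 hvalid3 (i := i) (j := j)
  have hbase : 2 * L ≤ p + 1 := by
    have h := key ⟨0, by omega⟩ ⟨1, by omega⟩ (by simp)
    have hpos : 0 < (Finset.univ.filter (fun q : Fin L × Fin L =>
        a q.1 - a q.2 = a ⟨0, by omega⟩ - a ⟨1, by omega⟩)).card :=
      Finset.card_pos.mpr ⟨(⟨0, by omega⟩, ⟨1, by omega⟩), by simp⟩
    omega
  have hcount : L * L - L ≤ (p + 2 - 2 * L) * (p - 1) := by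
    let P := (Finset.univ : Finset (Fin L)).offDiag
    let f : Fin L × Fin L → ZMod p := fun q => a q.1 - a q.2
    have hP : P.card = L * L - L := by simp [P, Finset.offDiag_card]
    have h1 : P.card ≤ (p + 2 - 2 * L) * (P.image f).card := by
      refine Finset.card_le_mul_card_image P _ ?_
      intro v hv
      obtain ⟨q, hq, rfl⟩ := Finset.mem_image.mp hv
      have h := key q.1 q.2 (Finset.mem_offDiag.mp hq).2.2
      have h2 : (P.filter (fun r => f r = f q)).card ≤ _ :=
        Finset.card_le_card (Finset.filter_subset_filter _ (Finset.subset_univ P))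
      simp only [f] at h2 ⊢
      omega
    have h2 : (P.image f).card ≤ p - 1 := by
      have hsub : P.image f ⊆ Finset.univ.erase 0 := by
        intro v hv
        obtain ⟨q, hq, rfl⟩ := Finset.mem_image.mp hv
        refine Finset.mem_erase.mpr ⟨fun h => ?_, Finset.mem_univ _⟩
        exact (Finset.mem_offDiag.mp hq).2.2 (hvalid2 (sub_eq_zero.mp h))
      have h := Finset.card_le_card hsub
      rwa [Finset.card_erase_of_mem (Finset.mem_univ _), Finset.card_univ, ZMod.card] at h
    rw [← hP]
    exact h1.trans (Nat.mul_le_mul_left _ h2)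
  have hcount' : (L : ℤ) * (L - 1) ≤ ((p : ℤ) - 2 * L + 2) * (p - 1) := by
    have h : ((L * L - L : ℕ) : ℤ) ≤ (((p + 2 - 2 * L) * (p - 1) : ℕ) : ℤ) := by
      exact_mod_cast hcount
    rw [Nat.cast_sub (Nat.le_mul_self L), Nat.cast_mul, Nat.cast_mul,
      Nat.cast_sub (by omega), Nat.cast_sub (by omega)] at h
    push_cast at h
    linarith
  have hM : (0 : ℤ) ≤ (p : ℤ) - 2 * L + 2 := by omega
  rcases le_or_gt ((p : ℤ) - 1) (2 * ((p : ℤ) - x - 1)) with h | h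
  · have h1 := mul_le_mul_of_nonneg_left h hM
    have h2 : (0 : ℤ) ≤ (x : ℤ) * (x + 1) := by positivity
    linarith
  · have hLx : (L : ℤ) ≤ x := by omega
    have h1 : (0 : ℤ) ≤ 2 * ((p : ℤ) - x - 1) * ((p : ℤ) - 2 * L + 2) :=
      mul_nonneg (by omega) hM
    have h2 : (L : ℤ) * (L - 1) ≤ (x : ℤ) * (x + 1) :=
      mul_le_mul hLx (by omega) (by omega) (by omega)
    linarith
end

section
/- Let L ≥ 2 and define integers c₀,…,c_{L−1} by c₀ = 0, c_i = (L+1)·i for 1 ≤ i ≤ ⌊(L−1)/2⌋, and c_i = (L+2)·(L−1−i) + 1 for ⌊(L−1)/2⌋+1 ≤ i ≤ L−1. Then c₀,…,c_{L−1} are pairwise distinct integers; in particular there are no indices j ∈ {0,…,⌊(L−1)/2⌋} and k ∈ {⌊(L−1)/2⌋+1,…,L−1} with (L+1)·j = (L+2)·(L−1−k) + 1. -/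
/-! The two branches cannot meet: `(L+1)·j = (L+2)·m + 1` rearranges to `(L+1)·(j - m) = m + 1`,
so `L + 1` would divide `m + 1`, which is impossible when `0 < m + 1 < L + 1`
(`branches_ne`). Here `m = L - 1 - k` lies in `[0, L)`. Within each branch `c` is an injective
affine function of the index. -/

theorem branches_ne (L j m : ℤ) (hm : 0 ≤ m) (hmL : m < L) :
    (L + 1) * j ≠ (L + 2) * m + 1 := by
  intro h
  have hdvd : L + 1 ∣ m + 1 := ⟨j - m, by linarith⟩
  have := Int.le_of_dvd (by omega) hdvd
  omega

/-- With `c i = (L+1)·i` for `0 ≤ i ≤ ⌊(L-1)/2⌋` and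
`c i = (L+2)·(L-1-i) + 1` for `⌊(L-1)/2⌋+1 ≤ i ≤ L-1`, the integers `c 0, …, c (L-1)` are
pairwise distinct; in particular there are no `j ∈ {0,…,⌊(L-1)/2⌋}` and
`k ∈ {⌊(L-1)/2⌋+1,…,L-1}` with `(L+1)·j = (L+2)·(L-1-k) + 1`. -/
theorem stmt_17 (L : ℕ) (hL : 2 ≤ L)
    (c : Fin L → ℤ)
    (hc1 : ∀ i : Fin L, i.val ≤ (L - 1) / 2 → c i = (L + 1 : ℤ) * i.val)
    (hc2 : ∀ i : Fin L, (L - 1) / 2 < i.val →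
      c i = (L + 2 : ℤ) * ((L - 1 - i.val : ℕ) : ℤ) + 1) :
    Function.Injective c ∧
      ∀ j k : ℕ, j ≤ (L - 1) / 2 → (L - 1) / 2 + 1 ≤ k → k ≤ L - 1 →
        (L + 1 : ℤ) * j ≠ (L + 2 : ℤ) * ((L - 1 - k : ℕ) : ℤ) + 1 := by
  have key : ∀ j k : ℕ,
      (L + 1 : ℤ) * j ≠ (L + 2 : ℤ) * ((L - 1 - k : ℕ) : ℤ) + 1 := fun j k =>
    branches_ne L j _ (by omega) (by omega)
  refine ⟨fun a b hab => ?_, fun j k _ _ _ => key j k⟩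
  rcases le_or_gt a.val ((L - 1) / 2) with ha | ha <;>
    rcases le_or_gt b.val ((L - 1) / 2) with hb | hb
  · rw [hc1 a ha, hc1 b hb] at hab
    have := mul_left_cancel₀ (by omega : (L + 1 : ℤ) ≠ 0) hab
    exact Fin.ext (by omega)
  · rw [hc1 a ha, hc2 b hb] at hab
    exact absurd hab (key _ _)
  · rw [hc2 a ha, hc1 b hb] at hab
    exact absurd hab.symm (key _ _)
  · rw [hc2 a ha, hc2 b hb] at hab
    have := mul_left_cancel₀ (by omega : (L + 2 : ℤ) ≠ 0) (add_right_cancel hab)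
    exact Fin.ext (by omega)
end

section
/- Let L ≥ 2 and define integers c₀,…,c_{L−1} by c₀ = 0, c_i = (L+1)·i for 1 ≤ i ≤ ⌊(L−1)/2⌋, and c_i = (L+2)·(L−1−i) + 1 for ⌊(L−1)/2⌋+1 ≤ i ≤ L−1. Consider the integer L×L matrix with (i,j)-entry i + c_j for 0 ≤ i,j ≤ L−1. Then every diagonal entry i + c_i is different from every other entry: for all i, j, k ∈ {0,…,L−1}, if i + c_i = j + c_k then (j,k) = (i,i). -/
/-!
Each entry of the matrix is read off in base `L + 1` or `L + 2`, where digits are unique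
(`digit_unique`). Put `v = L - 1 - i` for a column `i` in the upper half.

* Column `k` in the lower half: the entries are `(L+1)·k + j`, with base-`(L+1)` digit `j ≤ L - 1`.
  A lower diagonal entry is `(L+1)·i + i`, so it forces `j = k = i`; an upper one is
  `(L+2)·v + 1 + i = (L+1)·v + L`, whose digit `L` never occurs.
* Column `k` in the upper half, `w = L - 1 - k`: the entries are `(L+2)·w + (j + 1)`, with
  base-`(L+2)` digit between `1` and `L`. An upper diagonal entry is `(L+2)·v + (i + 1)`, so it
  forces `j = i` and `w = v`; a lower one is `(L+2)·i`, whose digit `0` never occurs.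
-/

/-- Uniqueness of the last digit in base `n`: both remainders lie in `[0, n)`. -/
theorem digit_unique {n x y a b : ℤ} (ha : 0 ≤ a) (han : a < n) (hb : 0 ≤ b) (hbn : b < n)
    (h : n * x + a = n * y + b) : x = y ∧ a = b := by
  have hxy : x = y := by
    rcases lt_trichotomy x y with hlt | heq | hgt
    · nlinarith
    · exact heq
    · nlinarith
  subst hxy
  exact ⟨rfl, by linarith⟩

/-- With `c i = (L+1)·i` for `0 ≤ i ≤ ⌊(L-1)/2⌋` and
`c i = (L+2)·(L-1-i) + 1` for `⌊(L-1)/2⌋+1 ≤ i ≤ L-1`, in the integer `L × L` matrix with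
`(i,j)`-entry `i + c j`, every diagonal entry `i + c i` is different from every other
entry: if `i + c i = j + c k` then `(j,k) = (i,i)`. -/
theorem stmt_18 (L : ℕ) (hL : 2 ≤ L)
    (c : Fin L → ℤ)
    (hc1 : ∀ i : Fin L, i.val ≤ (L - 1) / 2 → c i = (L + 1 : ℤ) * i.val)
    (hc2 : ∀ i : Fin L, (L - 1) / 2 < i.val →
      c i = (L + 2 : ℤ) * ((L - 1 - i.val : ℕ) : ℤ) + 1) :
    ∀ i j k : Fin L, (i.val : ℤ) + c i = (j.val : ℤ) + c k → j = i ∧ k = i := by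
  intro i j k h
  have hi := i.isLt
  have hj := j.isLt
  have hk := k.isLt
  have hv : ((L - 1 - i.val : ℕ) : ℤ) = L - 1 - i.val := by omega
  have hw : ((L - 1 - k.val : ℕ) : ℤ) = L - 1 - k.val := by omega
  simp only [Fin.ext_iff]
  rcases le_or_gt i.val ((L - 1) / 2) with hil | hiu <;>
    rcases le_or_gt k.val ((L - 1) / 2) with hkl | hku
  · rw [hc1 i hil, hc1 k hkl] at h
    have := digit_unique (n := (L + 1 : ℤ)) (x := i.val) (y := k.val) (a := i.val) (b := j.val)
      (by omega) (by omega) (by omega) (by omega) (by linarith)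
    omega
  · rw [hc1 i hil, hc2 k hku, hw] at h
    have := digit_unique (n := (L + 2 : ℤ)) (x := i.val) (y := L - 1 - k.val) (a := 0)
      (b := j.val + 1) (by omega) (by omega) (by omega) (by omega) (by linarith)
    omega
  · rw [hc2 i hiu, hc1 k hkl, hv] at h
    have := digit_unique (n := (L + 1 : ℤ)) (x := L - 1 - i.val) (y := k.val) (a := L)
      (b := j.val) (by omega) (by omega) (by omega) (by omega) (by linarith)
    omega
  · rw [hc2 i hiu, hc2 k hku, hv, hw] at h
    have := digit_unique (n := (L + 2 : ℤ)) (x := L - 1 - i.val) (y := L - 1 - k.val)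
      (a := i.val + 1) (b := j.val + 1)
      (by omega) (by omega) (by omega) (by omega) (by linarith)
    omega
end
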